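/- arXiv:1909.05579 — 2 statements merged into one kernel-verified Lean document; each statement's English description precedes it below -/
import Mathlib

section
/- Let c_0, …, c_19 be indeterminates over ℂ, let F be the generic quaternary cubic form with coefficients c_0, …, c_19, let M be its Nanson matrix with entries in R = ℂ[c_0, …, c_19], and for k ≥ 1 let I_k ⊂ R be the ideal generated by all (20−k+1)×(20−k+1) minors of M. Then the zero locus V_2 of I_2 has codimension exactly 2 in P^19 (equivalently, the affine cone V(I_2) ⊆ ℂ^20 has Krull dimension 18), and for every k ≥ 3 the zero locus V_k of I_k has codimension at least 3 in P^19 (equivalently, the affine cone V(I_k) has Krull dimension at most 17). -/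
/-!
The dimension of `V(I) ⊆ ℂ²⁰` is the largest transcendence degree over `ℂ` of the coordinates of a
point of `V(I)` in an extension field, so both bounds are about the Nanson rank of cubic forms over
large fields.

For the upper bounds, `Vₖ` is stable under `GL₄`, and in particular under tori acting with chosen
weights. The cone swept out by a point under such a torus contains limits in which the coordinates
of positive weight vanish, and a hyperplane section costs at most one transcendence degree. A point
of too large transcendence degree therefore degenerates to one of a few explicit sparse cubics,
whose tangent plane sections have a cusp, a tacnode, a double line or concurrent lines, and for
these the kernel of the Nanson matrix is computed by hand to be too small.

For the lower bound, the cubic surfaces with an `A₂` singularity, `x₀ q(x₂, x₃) + c(x₁, x₂, x₃)` up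
to shears, form a family of dimension 18. With weights 0, 2, 3, 3 on the variables such a cubic has
order at least 6, so each of the twenty cubics spanning the row space of its Nanson matrix has order
at least 3. Hence `x₀³` and `x₀²x₁` do not occur in them, and the rank is at most 18.
-/

open MvPolynomial

/-- The exponent vectors of the 20 degree-3 monomials in `x₀, x₁, x₂, x₃`, in a fixed order. -/
noncomputable def cubicExp : Fin 20 → (Fin 4 →₀ ℕ) := fun m =>
  Finsupp.equivFunOnFinite.symm
    (![![3,0,0,0], ![2,1,0,0], ![2,0,1,0], ![2,0,0,1],
       ![1,2,0,0], ![1,1,1,0], ![1,1,0,1], ![1,0,2,0], ![1,0,1,1], ![1,0,0,2],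
       ![0,3,0,0], ![0,2,1,0], ![0,2,0,1], ![0,1,2,0], ![0,1,1,1], ![0,1,0,2],
       ![0,0,3,0], ![0,0,2,1], ![0,0,1,2], ![0,0,0,3]] m)

/-- The twenty cubic forms of Nanson's construction: the sixteen products `xⱼ · Qᵢ`
and the four partial derivatives of the Jacobian determinant of `Q₁, …, Q₄`. -/
noncomputable def nansonRow {K : Type*} [CommRing K]
    (Q : Fin 4 → MvPolynomial (Fin 4) K) : Fin 20 → MvPolynomial (Fin 4) K := fun r =>
  if h : (r : ℕ) < 16 then
    X (⟨(r : ℕ) % 4, by omega⟩ : Fin 4) * Q ⟨(r : ℕ) / 4, by omega⟩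
  else
    pderiv (⟨(r : ℕ) - 16, by omega⟩ : Fin 4)
      (Matrix.det (Matrix.of fun i j : Fin 4 => pderiv j (Q i)))

/-- Nanson's 20 × 20 matrix of four quaternary quadrics: the coefficient matrix of the
twenty cubics `nansonRow Q` with respect to the twenty degree-3 monomials. -/
noncomputable def nansonMatrix {K : Type*} [CommRing K]
    (Q : Fin 4 → MvPolynomial (Fin 4) K) : Matrix (Fin 20) (Fin 20) K :=
  Matrix.of fun r c => coeff (cubicExp c) (nansonRow Q r)

/-- The generic quaternary cubic form, with the 20 indeterminates `c₀, …, c₁₉` as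
coefficients. -/
noncomputable def genericCubic : MvPolynomial (Fin 4) (MvPolynomial (Fin 20) ℂ) :=
  ∑ m : Fin 20, monomial (cubicExp m) (X m : MvPolynomial (Fin 20) ℂ)

/-- The Nanson matrix of the generic quaternary cubic form; its entries are polynomials in
the 20 generic coefficients. -/
noncomputable def genericNansonMatrix :
    Matrix (Fin 20) (Fin 20) (MvPolynomial (Fin 20) ℂ) :=
  nansonMatrix fun i => pderiv i genericCubic

/-- The ideal `Iₖ` generated by all `(20-k+1) × (20-k+1)` minors of the Nanson matrix of
the generic quaternary cubic. -/
noncomputable def nansonMinorsIdeal (k : ℕ) : Ideal (MvPolynomial (Fin 20) ℂ) :=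
  Ideal.span (Set.range fun rc : (Fin (20 - k + 1) → Fin 20) × (Fin (20 - k + 1) → Fin 20) =>
    (genericNansonMatrix.submatrix rc.1 rc.2).det)

/-! ### Transcendence degree of a point -/

section PointTrdeg

variable (k : Type*) [Field k] {ι κ K L : Type*}
  [CommRing K] [IsDomain K] [Algebra k K] [CommRing L] [IsDomain L] [Algebra k L]

/-- The transcendence degree over `k` of the coordinates of a point `g` with values in a domain. -/
noncomputable def pointTrdeg (g : ι → K) : ℕ∞ :=
  (AlgebraicIndependent.matroid k K).eRk (Set.range g)

variable {k}

theorem encard_le_pointTrdeg {g : ι → K} {s : Set ι}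
    (hs : AlgebraicIndependent k fun i : s => g i) : s.encard ≤ pointTrdeg k g := by
  have hinj : Set.InjOn g s := Set.injOn_iff_injective.mpr hs.injective
  have hind : (AlgebraicIndependent.matroid k K).Indep (g '' s) := by
    rw [AlgebraicIndependent.matroid_indep_iff, Set.image_eq_range]
    exact hs.to_subtype_range
  rw [← hinj.encard_image]
  exact hind.encard_le_eRk_of_subset (Set.image_subset_range g s)

theorem exists_algebraicIndependent_encard_eq_pointTrdeg (g : ι → K) :
    ∃ s : Set ι, (AlgebraicIndependent k fun i : s => g i) ∧ s.encard = pointTrdeg k g := by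
  obtain ⟨B, hB⟩ := (AlgebraicIndependent.matroid k K).exists_isBasis (Set.range g)
  obtain ⟨s, rfl, hinj⟩ := Set.exists_image_eq_injOn_of_subset_range hB.subset
  refine ⟨s, ?_, by rw [← hinj.encard_image, hB.encard_eq_eRk, pointTrdeg]⟩
  exact (AlgebraicIndependent.matroid_indep_iff.mp hB.indep).comp
    (s.imageFactorization g) hinj.imageFactorization_injective

theorem pointTrdeg_le_of_isAlgebraic {g : ι → K} {y : κ → K} (T : Set K)
    (h : ∀ j, IsAlgebraic (Algebra.adjoin k (Set.range g ∪ T)) (y j)) :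
    pointTrdeg k y ≤ pointTrdeg k g + T.encard := by
  refine le_trans ?_ ((AlgebraicIndependent.matroid k K).eRk_union_le_eRk_add_encard _ T)
  rw [pointTrdeg, ← Matroid.eRk_closure_eq _ (Set.range g ∪ T),
    AlgebraicIndependent.matroid_closure_eq]
  exact Matroid.eRk_mono _ (Set.range_subset_iff.mpr h)

theorem pointTrdeg_comp_le (f : K →ₐ[k] L) (g : ι → K) :
    pointTrdeg k (f ∘ g) ≤ pointTrdeg k g := by
  obtain ⟨s, hs, hcard⟩ := exists_algebraicIndependent_encard_eq_pointTrdeg (k := k) (f ∘ g)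
  exact hcard ▸ encard_le_pointTrdeg (AlgebraicIndependent.of_comp f hs)

theorem pointTrdeg_comp {f : K →ₐ[k] L} (hf : Function.Injective f) (g : ι → K) :
    pointTrdeg k (f ∘ g) = pointTrdeg k g := by
  refine (pointTrdeg_comp_le f g).antisymm ?_
  obtain ⟨s, hs, hcard⟩ := exists_algebraicIndependent_encard_eq_pointTrdeg (k := k) g
  exact hcard ▸ encard_le_pointTrdeg (hs.map' hf)

theorem pointTrdeg_eq_trdeg {g : ι → K} (hg : Algebra.adjoin k (Set.range g) = ⊤) :
    pointTrdeg k g = (Algebra.trdeg k K).toENat := by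
  rw [← AlgebraicIndependent.matroid_cRank_eq, Matroid.toENat_cRank_eq, pointTrdeg]
  refine Matroid.Spanning.eRk_eq (AlgebraicIndependent.matroid_spanning_iff.mpr ?_)
  rw [hg]
  exact ⟨fun a => isAlgebraic_algebraMap (⟨a, trivial⟩ : (⊤ : Subalgebra k K))⟩

end PointTrdeg

/-! ### Krull dimension of finitely generated algebras -/

theorem ringKrullDim_eq_of_isIntegral (R S : Type*) [CommRing R] [CommRing S] [Algebra R S]
    [Algebra.IsIntegral R S] [FaithfulSMul R S] : ringKrullDim S = ringKrullDim R := by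
  refine le_antisymm ?_ (iSup_le fun l => ?_)
  · exact Order.krullDim_le_of_strictMono (PrimeSpectrum.comap (algebraMap R S))
      fun x y hxy => Ideal.IsIntegral.comap_lt_comap (I := x.asIdeal) hxy
  · obtain ⟨⟨P, _, _⟩⟩ := Ideal.nonempty_primesOver (S := S) l.head.asIdeal
    obtain ⟨L, hL, -, -⟩ := Ideal.exists_ltSeries_of_hasGoingUp l P
    exact hL ▸ Order.LTSeries.length_le_krullDim L

theorem height_eq_of_isMaximal_mvPolynomial_fin {k : Type*} [Field k] {n : ℕ}
    (M : Ideal (MvPolynomial (Fin n) k)) [hM : M.IsMaximal] : M.height = n := by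
  induction n with
  | zero =>
    have h := Ideal.height_le_ringKrullDim_of_ne_top hM.ne_top
    rw [MvPolynomial.ringKrullDim_of_isNoetherianRing, ringKrullDim_eq_zero_of_field] at h
    simpa using h
  | succ n ih =>
    let e := (finSuccEquiv k n).toRingEquiv
    have hmax : (M.map e).IsMaximal := Ideal.map_isMaximal_of_equiv e
    have hunder : ((M.map e).under (MvPolynomial (Fin n) k)).IsMaximal :=
      Polynomial.isMaximal_comap_C_of_isJacobsonRing _
    have hover := Ideal.over_under (A := MvPolynomial (Fin n) k) (M.map e)
    rw [← e.height_map M, Polynomial.height_eq_height_add_one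
      ((M.map e).under (MvPolynomial (Fin n) k)) (M.map e), ih, Nat.cast_succ]

theorem ringKrullDim_eq_trdeg (k : Type*) [Field k] (D : Type*) [CommRing D] [IsDomain D]
    [Algebra k D] [Algebra.FiniteType k D] :
    ringKrullDim D = (Algebra.trdeg k D).toENat := by
  obtain ⟨s, φ, hφ, hint⟩ := exists_integral_inj_algHom_of_fg k D
  algebraize [φ.toRingHom]
  have : Algebra.IsIntegral (MvPolynomial (Fin s) k) D := ⟨hint⟩
  have : FaithfulSMul (MvPolynomial (Fin s) k) D :=
    (faithfulSMul_iff_algebraMap_injective _ _).mpr hφ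
  have htower : IsScalarTower k (MvPolynomial (Fin s) k) D :=
    IsScalarTower.of_algebraMap_eq' φ.comp_algebraMap.symm
  have htr := lift_trdeg_add_eq k (MvPolynomial (Fin s) k) D
  rw [trdeg_eq_zero (R := MvPolynomial (Fin s) k) (A := D), MvPolynomial.trdeg_of_isDomain] at htr
  have : (Algebra.trdeg k D).toENat = s := by
    simpa using congrArg Cardinal.toENat htr.symm
  rw [this, ringKrullDim_eq_of_isIntegral (MvPolynomial (Fin s) k) D,
    MvPolynomial.ringKrullDim_of_isNoetherianRing, ringKrullDim_eq_zero_of_field, zero_add,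
    Nat.card_fin]
  rfl

theorem height_eq_ringKrullDim_of_isMaximal (k : Type*) [Field k] {D : Type*} [CommRing D]
    [IsDomain D] [Algebra k D] [Algebra.FiniteType k D] (M : Ideal D) [M.IsMaximal] :
    M.height = ringKrullDim D := by
  obtain ⟨s, φ, hφ, hint⟩ := exists_integral_inj_algHom_of_fg k D
  algebraize [φ.toRingHom]
  have : Algebra.IsIntegral (MvPolynomial (Fin s) k) D := ⟨hint⟩
  have : FaithfulSMul (MvPolynomial (Fin s) k) D :=
    (faithfulSMul_iff_algebraMap_injective _ _).mpr hφ
  refine (Ideal.height_le_ringKrullDim_of_ne_top Ideal.IsPrime.ne_top').antisymm ?_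
  let m := M.under (MvPolynomial (Fin s) k)
  have hm : m.IsMaximal := inferInstance
  have : IsNoetherianRing D := Algebra.FiniteType.isNoetherianRing k D
  rw [ringKrullDim_eq_of_isIntegral (MvPolynomial (Fin s) k) D,
    MvPolynomial.ringKrullDim_of_isNoetherianRing, ringKrullDim_eq_zero_of_field, zero_add,
    Nat.card_fin, Ideal.height_eq_height_add_of_liesOver_of_hasGoingDown m M,
    height_eq_of_isMaximal_mvPolynomial_fin m]
  exact_mod_cast le_self_add

theorem ringKrullDim_le_ringKrullDim_quotient_span_singleton_add_one (k : Type*) [Field k]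
    {D : Type*} [CommRing D] [IsDomain D] [Algebra k D] [Algebra.FiniteType k D] {f : D}
    (hf : ¬ IsUnit f) :
    ringKrullDim D ≤ ringKrullDim (D ⧸ Ideal.span {f}) + 1 := by
  have : IsNoetherianRing D := Algebra.FiniteType.isNoetherianRing k D
  obtain ⟨M, hM, hfM⟩ := exists_max_ideal_of_mem_nonunits hf
  rw [← height_eq_ringKrullDim_of_isMaximal k M]
  exact Ideal.height_le_ringKrullDim_quotient_add_one hfM

/-! ### Krull dimension and points -/

section Points

universe u v

variable {k : Type u} [Field k] {ι : Type v} [Finite ι]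

theorem exists_isPrime_le_ringKrullDim_quotient {R : Type*} [CommRing R] {I : Ideal R} {r : ℕ}
    (h : r ≤ ringKrullDim (R ⧸ I)) : ∃ Q ≥ I, Q.IsPrime ∧ r ≤ ringKrullDim (R ⧸ Q) := by
  rw [ringKrullDim_quotient, Order.le_krullDim_iff] at h
  obtain ⟨l, hl⟩ := h
  refine ⟨l.head.1.asIdeal, l.head.2, inferInstance, ?_⟩
  rw [ringKrullDim_quotient, Order.le_krullDim_iff]
  let l' : LTSeries (PrimeSpectrum.zeroLocus (l.head.1.asIdeal : Set R)) :=
    { length := l.length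
      toFun := fun i => ⟨(l i).1, l.head_le i⟩
      step := l.step }
  exact ⟨l', hl⟩

theorem ringKrullDim_quotient_ker_aeval {A : Type*} [CommRing A] [IsDomain A] [Algebra k A]
    (g : ι → A) : ringKrullDim (MvPolynomial ι k ⧸ RingHom.ker (aeval (R := k) g)) =
      pointTrdeg k g := by
  let f : MvPolynomial ι k →ₐ[k] A := aeval g
  have : (RingHom.ker f).IsPrime := RingHom.ker_isPrime f
  let x : ι → MvPolynomial ι k ⧸ RingHom.ker f := fun i => Ideal.Quotient.mkₐ k _ (X i)
  have hx : Algebra.adjoin k (Set.range x) = ⊤ := by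
    have haeval : aeval x = Ideal.Quotient.mkₐ k (RingHom.ker f) := (aeval_unique _).symm
    rw [Algebra.adjoin_range_eq_range_aeval, haeval, AlgHom.range_eq_top]
    exact Ideal.Quotient.mkₐ_surjective k _
  have hfx : Ideal.kerLiftAlg f ∘ x = g := funext fun i => by simp [x, f]
  rw [ringKrullDim_eq_trdeg k, ← pointTrdeg_eq_trdeg hx,
    ← pointTrdeg_comp (Ideal.kerLiftAlg_injective f), hfx]

theorem exists_pointTrdeg_ge {I : Ideal (MvPolynomial ι k)} {r : ℕ}
    (h : r ≤ ringKrullDim (MvPolynomial ι k ⧸ I)) :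
    ∃ (K : Type (max u v)) (_ : Field K) (_ : Algebra k K) (g : ι → K),
      (∀ p ∈ I, aeval g p = 0) ∧ r ≤ pointTrdeg k g := by
  obtain ⟨Q, hIQ, hQ, hr⟩ := exists_isPrime_le_ringKrullDim_quotient h
  let θ : MvPolynomial ι k →ₐ[k] FractionRing (MvPolynomial ι k ⧸ Q) :=
    (Algebra.algHom k (MvPolynomial ι k ⧸ Q) _).comp (Ideal.Quotient.mkₐ k Q)
  have hθ : aeval (fun i => θ (X i)) = θ := (aeval_unique θ).symm
  have hker : RingHom.ker (aeval (R := k) fun i => θ (X i)) = Q := by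
    ext p
    rw [hθ, RingHom.mem_ker]
    change algebraMap _ (FractionRing (MvPolynomial ι k ⧸ Q)) (Ideal.Quotient.mk Q p) = 0 ↔ _
    rw [FaithfulSMul.algebraMap_eq_zero_iff, Ideal.Quotient.eq_zero_iff_mem]
  refine ⟨FractionRing (MvPolynomial ι k ⧸ Q), inferInstance, inferInstance,
    fun i => θ (X i), fun p hp => ?_, ?_⟩
  · exact RingHom.mem_ker.mp (hker.symm ▸ hIQ hp)
  · rw [← hker, ringKrullDim_quotient_ker_aeval] at hr
    exact_mod_cast hr

theorem pointTrdeg_le_ringKrullDim_quotient {I : Ideal (MvPolynomial ι k)} {A : Type*} [CommRing A]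
    [IsDomain A] [Algebra k A] {g : ι → A} (hg : ∀ p ∈ I, aeval g p = 0) :
    pointTrdeg k g ≤ ringKrullDim (MvPolynomial ι k ⧸ I) := by
  rw [← ringKrullDim_quotient_ker_aeval]
  exact ringKrullDim_le_of_surjective (Ideal.Quotient.factor hg)
    (Ideal.Quotient.factor_surjective hg)

theorem exists_specialization {A E : Type*} [CommRing A] [IsDomain A] [Algebra k A] [CommRing E]
    [Nontrivial E] [Algebra k E] (ε : A →ₐ[k] E) {G : ι → A} {a : ι} (ha : ε (G a) = 0) {r : ℕ}
    (hr : r + 1 ≤ pointTrdeg k G) :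
    ∃ (K : Type (max u v)) (_ : Field K) (_ : Algebra k K) (g : ι → K),
      (∀ p : MvPolynomial ι k, aeval G p = 0 → aeval g p = 0) ∧ g a = 0 ∧ r ≤ pointTrdeg k g := by
  let P := RingHom.ker (aeval (R := k) G)
  have hP : P.IsPrime := RingHom.ker_isPrime _
  have hunit : ¬ IsUnit (Ideal.Quotient.mk P (X a)) := fun hu => by
    let ψ := Ideal.Quotient.lift P (ε.toRingHom.comp (aeval (R := k) G).toRingHom)
      fun p hp => by simpa using congrArg ε hp
    have hψ : ψ (Ideal.Quotient.mk P (X a)) = 0 := by simpa [ψ] using ha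
    exact (hu.map ψ).ne_zero hψ
  have hdim := ringKrullDim_le_ringKrullDim_quotient_span_singleton_add_one k hunit
  have hquot : ringKrullDim ((MvPolynomial ι k ⧸ P) ⧸ Ideal.span {Ideal.Quotient.mk P (X a)}) =
      ringKrullDim (MvPolynomial ι k ⧸ P ⊔ Ideal.span {X a}) := by
    rw [← Set.image_singleton, ← Ideal.map_span]
    exact ringKrullDim_eq_of_ringEquiv (DoubleQuot.quotQuotEquivQuotSup P (Ideal.span {X a}))
  rw [hquot, ringKrullDim_quotient_ker_aeval] at hdim
  have hr' : (r : WithBot ℕ∞) + 1 ≤ pointTrdeg k G := by exact_mod_cast hr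
  obtain ⟨K, _, _, g, hg, hgr⟩ := exists_pointTrdeg_ge
    (ENat.WithBot.add_le_add_one_right_iff.mp (hr'.trans hdim))
  refine ⟨K, inferInstance, inferInstance, g, fun p hp => hg p (Ideal.mem_sup_left hp), ?_, hgr⟩
  simpa using hg (X a) (Ideal.mem_sup_right (Ideal.mem_span_singleton_self _))

end Points

/-! ### Degenerating points along one-parameter groups -/

section OneParameter

universe u v

variable {k : Type u} [Field k] {ι : Type v}

/-- The zero locus of `I` has a point over some extension field of `k` whose coordinates in `Z`
are `0`, whose coordinates in `N` are `1`, and whose transcendence degree is at least `r`. -/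
def HasPoint (I : Ideal (MvPolynomial ι k)) (Z N : Finset ι) (r : ℕ) : Prop :=
  ∃ (K : Type (max u v)) (_ : Field K) (_ : Algebra k K), ∃ g ∈ zeroLocus K I,
    (∀ m ∈ Z, g m = 0) ∧ (∀ m ∈ N, g m = 1) ∧ r ≤ pointTrdeg k g

/-- The zero locus of `I` is stable under the one-parameter group acting with weights `w`. -/
def IsScaleInvariant (I : Ideal (MvPolynomial ι k)) (w : ι → ℤ) : Prop :=
  ∀ (K : Type (max u v)) [Field K] [Algebra k K], ∀ g ∈ zeroLocus K I, ∀ τ : K, τ ≠ 0 →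
    (fun m => τ ^ w m * g m) ∈ zeroLocus K I

theorem comp_mem_zeroLocus {I : Ideal (MvPolynomial ι k)} {K L : Type*} [Field K] [Algebra k K]
    [Field L] [Algebra k L] {g : ι → K} (hg : g ∈ zeroLocus K I) (f : K →ₐ[k] L) :
    f ∘ g ∈ zeroLocus L I := fun p hp => by
  change aeval (fun m => f (g m)) p = 0
  rw [← comp_aeval_apply, hg p hp, map_zero]

theorem IsScaleInvariant.aeval_orbit_eq_zero {I : Ideal (MvPolynomial ι k)} {w : ι → ℤ}
    (hI : IsScaleInvariant I w) {K : Type (max u v)} [Field K] [Algebra k K] {g : ι → K}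
    (hg : g ∈ zeroLocus K I) (hw : ∀ m, g m ≠ 0 → 0 ≤ w m) {p : MvPolynomial ι k} (hp : p ∈ I) :
    aeval (fun m => Polynomial.C (g m) * Polynomial.X ^ (w m).toNat) p = 0 := by
  let F := FractionRing (Polynomial K)
  let κ : K →ₐ[k] F := IsScalarTower.toAlgHom k K F
  let φ : Polynomial K →ₐ[k] F := IsScalarTower.toAlgHom k (Polynomial K) F
  have hφ : Function.Injective φ := IsFractionRing.injective (Polynomial K) F
  have hX : φ Polynomial.X ≠ 0 := (map_ne_zero_iff φ hφ).mpr Polynomial.X_ne_zero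
  have horbit := hI F (κ ∘ g) (comp_mem_zeroLocus hg κ) (φ Polynomial.X) hX p hp
  refine hφ ?_
  rw [map_zero, comp_aeval_apply, ← horbit]
  congr 2
  funext m
  have hκ : κ (g m) = φ (Polynomial.C (g m)) :=
    IsScalarTower.algebraMap_apply K (Polynomial K) F (g m)
  by_cases hm : g m = 0
  · simp [hm]
  · rw [map_mul, map_pow, Function.comp_apply, hκ, mul_comm,
      ← zpow_natCast, Int.toNat_of_nonneg (hw m hm)]

/-- As `t → 0` the one-parameter group contracts the locus `{g_Z = 0, g_N = 1}`, so the closure of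
the cone swept out by a point meets `g_a = 0`, and it does so in codimension at most one. -/
theorem HasPoint.slice [Finite ι] [DecidableEq ι] {I : Ideal (MvPolynomial ι k)} {Z N : Finset ι}
    {r : ℕ} (h : HasPoint I Z N (r + 1)) {w : ι → ℤ} (hw : IsScaleInvariant I w)
    (hpos : ∀ m, m ∈ Z ∨ (m ∈ N ∧ w m = 0) ∨ (m ∉ N ∧ 0 < w m)) {a : ι} (ha : 0 < w a) :
    HasPoint I (insert a Z) N r := by
  obtain ⟨K, _, _, g, hI, hZ, hN, hr⟩ := h
  let G : ι → Polynomial K := fun m => Polynomial.C (g m) * Polynomial.X ^ (w m).toNat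
  have hGr : (r + 1 : ℕ∞) ≤ pointTrdeg k G := by
    refine le_trans (by exact_mod_cast hr) (le_of_eq_of_le ?_ (pointTrdeg_comp_le
      ((Polynomial.aeval (1 : K)).restrictScalars k) G))
    congr 1
    funext m
    simp [G]
  have hGa : (Polynomial.aeval (0 : K)).restrictScalars k (G a) = 0 := by
    simp [G, (Int.lt_toNat.mpr (by simpa using ha) : 0 < (w a).toNat).ne']
  obtain ⟨K', _, _, g', hg', hg'a, hg'r⟩ := exists_specialization _ hGa hGr
  have hw0 : ∀ m, g m ≠ 0 → 0 ≤ w m := fun m hm => by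
    rcases hpos m with h | h | h
    exacts [absurd (hZ m h) hm, h.2.ge, h.2.le]
  refine ⟨K', _, _, g', fun p hp => hg' p (hw.aeval_orbit_eq_zero hI hw0 hp),
    Finset.forall_mem_insert _ _ _ |>.mpr ⟨hg'a, fun m hm => ?_⟩, fun m hm => ?_, hg'r⟩
  · simpa using hg' (X m) (by simp [G, hZ m hm])
  · have hm0 : w m = 0 := by
      rcases hpos m with h | h | h
      exacts [absurd ((hZ m h).symm.trans (hN m hm)) zero_ne_one, h.2, absurd hm h.1]
    have hsub := hg' (X m - 1) (by simp [G, hN m hm, hm0])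
    rwa [map_sub, aeval_X, map_one, sub_eq_zero] at hsub

theorem pointTrdeg_le_pointTrdeg_zpow_mul_add_one {K : Type*} [Field K] [Algebra k K] {τ : K}
    (hτ : τ ≠ 0) (w : ι → ℤ) (g : ι → K) :
    pointTrdeg k g ≤ pointTrdeg k (fun m => τ ^ w m * g m) + 1 := by
  rw [← Set.encard_singleton τ]
  refine pointTrdeg_le_of_isAlgebraic {τ} fun m => ?_
  set S := Algebra.adjoin k (Set.range (fun m => τ ^ w m * g m) ∪ {τ})
  have hmem : ∀ x ∈ Set.range (fun m => τ ^ w m * g m) ∪ {τ}, IsAlgebraic S x :=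
    fun x hx => isAlgebraic_algebraMap (⟨x, Algebra.subset_adjoin hx⟩ : S)
  have hτS : IsAlgebraic S τ := hmem τ (Or.inr rfl)
  have hzpow : IsAlgebraic S (τ ^ w m) := by
    rcases Int.eq_nat_or_neg (w m) with ⟨n, hn | hn⟩
    · simpa [hn] using hτS.pow n
    · simpa [hn] using (hτS.pow n).inv
  rw [← inv_mul_cancel_left₀ (zpow_ne_zero (w m) hτ) (g m)]
  exact hzpow.inv.mul (hmem _ (Or.inl ⟨m, rfl⟩))

theorem exists_zpow_eq {K : Type*} [Field K] [IsAlgClosed K] {x : K} (hx : x ≠ 0) {n : ℤ}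
    (hn : n ≠ 0) : ∃ τ : K, τ ≠ 0 ∧ τ ^ n = x := by
  have hpos : 0 < n.natAbs := Int.natAbs_pos.mpr hn
  obtain ⟨z, rfl⟩ := IsAlgClosed.exists_pow_nat_eq x hpos
  have hz : z ≠ 0 := (pow_ne_zero_iff hpos.ne').mp hx
  rcases Int.natAbs_eq n with h | h
  · exact ⟨z, hz, by rw [h, zpow_natCast, Int.natAbs_natCast]⟩
  · exact ⟨z⁻¹, inv_ne_zero hz, by
      rw [h, zpow_neg, zpow_natCast, inv_pow, inv_inv, Int.natAbs_neg, Int.natAbs_natCast]⟩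

theorem HasPoint.normalise [DecidableEq ι] {I : Ideal (MvPolynomial ι k)} {Z N : Finset ι}
    {r : ℕ} (h : HasPoint I Z N (r + 1)) {w : ι → ℤ} (hw : IsScaleInvariant I w) {a : ι}
    (ha : w a ≠ 0) (hN0 : ∀ m ∈ N, w m = 0) :
    HasPoint I (insert a Z) N (r + 1) ∨ HasPoint I Z (insert a N) r := by
  obtain ⟨K, _, _, g, hI, hZ, hN, hr⟩ := h
  by_cases hga : g a = 0
  · exact Or.inl ⟨K, _, _, g, hI, Finset.forall_mem_insert _ _ _ |>.mpr ⟨hga, hZ⟩, hN, hr⟩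
  let κ : K →ₐ[k] AlgebraicClosure K := IsScalarTower.toAlgHom k K (AlgebraicClosure K)
  have hκ : Function.Injective κ := (algebraMap K (AlgebraicClosure K)).injective
  have hκa : κ (g a) ≠ 0 := (map_ne_zero_iff κ hκ).mpr hga
  obtain ⟨τ, hτ, hτa⟩ := exists_zpow_eq (inv_ne_zero hκa) ha
  refine Or.inr ⟨_, _, _, _, hw _ _ (comp_mem_zeroLocus hI κ) τ hτ, fun m hm => ?_,
    Finset.forall_mem_insert _ _ _ |>.mpr ⟨?_, fun m hm => ?_⟩, ?_⟩
  · simp [hZ m hm]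
  · simp [hτa, inv_mul_cancel₀ hκa]
  · simp [hN m hm, hN0 m hm]
  · have hle := pointTrdeg_le_pointTrdeg_zpow_mul_add_one (k := k) hτ w (κ ∘ g)
    rw [pointTrdeg_comp hκ] at hle
    exact (ENat.add_le_add_iff_right ENat.one_ne_top).mp
      (le_trans (by exact_mod_cast hr) hle)

theorem HasPoint.mono {I : Ideal (MvPolynomial ι k)} {Z N Z' N' : Finset ι} {r r' : ℕ}
    (h : HasPoint I Z N r) (hZ : Z' ⊆ Z) (hN : N' ⊆ N) (hr : r' ≤ r) : HasPoint I Z' N' r' := by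
  obtain ⟨K, _, _, g, hI, hgZ, hgN, hgr⟩ := h
  exact ⟨K, _, _, g, hI, fun m hm => hgZ m (hZ hm), fun m hm => hgN m (hN hm),
    le_trans (by exact_mod_cast hr) hgr⟩

theorem disjoint_of_algebraicIndependent {K : Type*} [Field K] [Algebra k K] {g : ι → K}
    {s : Set ι} (hs : AlgebraicIndependent k fun i : s => g i) {Z N : Finset ι}
    (hZ : ∀ m ∈ Z, g m = 0) (hN : ∀ m ∈ N, g m = 1) : ∀ m ∈ s, m ∉ Z ∧ m ∉ N := by
  refine fun m hm => ⟨fun hmZ => hs.transcendental ⟨m, hm⟩ ?_,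
    fun hmN => hs.transcendental ⟨m, hm⟩ ?_⟩
  · simpa only [hZ m hmZ] using isAlgebraic_zero
  · simpa only [hN m hmN] using isAlgebraic_one

theorem HasPoint.exists_ne_zero {I : Ideal (MvPolynomial ι k)} {Z N : Finset ι} {r : ℕ}
    (h : HasPoint I Z N (r + 1)) :
    ∃ (K : Type (max u v)) (_ : Field K) (_ : Algebra k K), ∃ g ∈ zeroLocus K I,
      (∀ m ∈ Z, g m = 0) ∧ (∀ m ∈ N, g m = 1) ∧ ∃ m, m ∉ Z ∧ m ∉ N ∧ g m ≠ 0 := by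
  obtain ⟨K, _, _, g, hI, hZ, hN, hr⟩ := h
  obtain ⟨s, hs, hcard⟩ := exists_algebraicIndependent_encard_eq_pointTrdeg (k := k) g
  obtain ⟨m, hm⟩ : s.Nonempty := by
    rw [← Set.encard_pos, hcard]
    exact lt_of_lt_of_le (by simp) hr
  obtain ⟨hmZ, hmN⟩ := disjoint_of_algebraicIndependent hs hZ hN m hm
  exact ⟨K, _, _, g, hI, hZ, hN, m, hmZ, hmN, hs.ne_zero ⟨m, hm⟩⟩

theorem aeval_eq_zero_of_algebraicIndependent {K : Type*} [Field K] [Algebra k K] {g : ι → K}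
    {s : Set ι} (hs : AlgebraicIndependent k fun i : s => g i) {v : ι → k}
    (hv : ∀ m ∉ s, g m = algebraMap k K (v m)) {p : MvPolynomial ι k} (hp : aeval g p = 0) :
    aeval v p = 0 := by
  classical
  let θ : ι → MvPolynomial s k := fun m => if hm : m ∈ s then X ⟨m, hm⟩ else C (v m)
  have hg : (fun m => aeval (fun i : s => g i) (θ m)) = g := funext fun m => by
    by_cases hm : m ∈ s
    · simp [θ, hm]
    · simp [θ, hm, hv m hm]
  have hθ : aeval θ p = 0 := algebraicIndependent_iff.mp hs _ <| by
    rw [comp_aeval_apply, hg, hp]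
  have hvθ : (fun m => aeval (fun i : s => v i) (θ m)) = v := funext fun m => by
    by_cases hm : m ∈ s <;> simp [θ, hm]
  rw [← hvθ, ← comp_aeval_apply, hθ, map_zero]

theorem HasPoint.mem_zeroLocus_of_card_le [Fintype ι] [DecidableEq ι]
    {I : Ideal (MvPolynomial ι k)} {Z N : Finset ι} {r : ℕ} (h : HasPoint I Z N r)
    (hr : Fintype.card ι ≤ r + (Z ∪ N).card) {v : ι → k} (hvZ : ∀ m ∈ Z, v m = 0)
    (hvN : ∀ m ∈ N, v m = 1) : v ∈ zeroLocus k I := by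
  obtain ⟨K, _, _, g, hI, hZ, hN, hgr⟩ := h
  obtain ⟨s, hs, hcard⟩ := exists_algebraicIndependent_encard_eq_pointTrdeg (k := k) g
  have hsub : s ⊆ ((Z ∪ N)ᶜ : Finset ι) := fun m hm => by
    simpa using disjoint_of_algebraicIndependent hs hZ hN m hm
  have heq : s = ((Z ∪ N)ᶜ : Finset ι) := by
    refine s.toFinite.eq_of_subset_of_encard_le hsub (le_trans ?_ (hcard ▸ hgr))
    rw [Set.encard_coe_eq_coe_finsetCard, Finset.card_compl]
    exact_mod_cast Nat.sub_le_iff_le_add.mpr hr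
  refine fun p hp => aeval_eq_zero_of_algebraicIndependent hs (fun m hm => ?_) (hI p hp)
  rw [heq, Finset.mem_coe, Finset.mem_compl, not_not, Finset.mem_union] at hm
  rcases hm with hm | hm
  · rw [hZ m hm, hvZ m hm, map_zero]
  · rw [hN m hm, hvN m hm, map_one]

end OneParameter

/-! ### Rank and minors -/

section Minors

variable {K m n : Type*} [Field K] [Finite m] [Fintype n]

theorem exists_rank_submatrix_rows_eq (A : Matrix m n K) {s : ℕ} (h : s ≤ A.rank) :
    ∃ r : Fin s → m, (A.submatrix r id).rank = s := by
  obtain ⟨κ, a, ha, hspan, hli⟩ := exists_linearIndependent' K A.row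
  have : Finite κ := Finite.of_injective a ha
  have := Fintype.ofFinite κ
  have hcard : Fintype.card κ = A.rank := by
    rw [Matrix.rank_eq_finrank_span_row, ← hspan, finrank_span_eq_card hli]
  let j : Fin s → κ := fun i => (Fintype.equivFin κ).symm (Fin.castLE (hcard ▸ h) i)
  have hj : Function.Injective j :=
    (Fintype.equivFin κ).symm.injective.comp (Fin.castLE_injective _)
  have hrows : LinearIndependent K (A.submatrix (a ∘ j) id).row := hli.comp j hj
  exact ⟨a ∘ j, by rw [hrows.rank_matrix, Fintype.card_fin]⟩

theorem isUnit_of_rank_eq_card [DecidableEq n] {A : Matrix n n K}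
    (h : A.rank = Fintype.card n) : IsUnit A := by
  have hker := LinearMap.finrank_range_add_finrank_ker A.mulVecLin
  rw [← Matrix.rank, h, Module.finrank_fintype_fun_eq_card, Nat.add_eq_left,
    Submodule.finrank_eq_zero, LinearMap.ker_eq_bot] at hker
  exact Matrix.mulVec_injective_iff_isUnit.mp hker

theorem rank_lt_iff_forall_minor_eq_zero (A : Matrix m n K) (s : ℕ) :
    A.rank < s ↔ ∀ (r : Fin s → m) (c : Fin s → n), (A.submatrix r c).det = 0 := by
  refine ⟨fun h r c => ?_, fun h => ?_⟩
  · by_contra hdet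
    have hrank := (Matrix.rank_of_det_ne_zero hdet).symm.trans_le (A.rank_submatrix_le r c)
    rw [Fintype.card_fin] at hrank
    exact absurd h hrank.not_gt
  · by_contra! hs
    obtain ⟨r, hr⟩ := exists_rank_submatrix_rows_eq A hs
    obtain ⟨c, hc⟩ := exists_rank_submatrix_rows_eq (A.submatrix r id).transpose
      (s := s) (by rw [Matrix.rank_transpose, hr])
    have hc' : (A.submatrix r c).rank = s := (A.submatrix r c).rank_transpose.symm.trans hc
    have hunit := isUnit_of_rank_eq_card (hc'.trans (Fintype.card_fin s).symm)
    exact not_isUnit_zero (h r c ▸ (Matrix.isUnit_iff_isUnit_det _).mp hunit)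

end Minors

/-! ### Hessians and linear substitutions -/

section Hessian

variable {R σ : Type*} [CommRing R]

theorem derivation_aeval [Fintype σ] {A M : Type*} [CommRing A] [Algebra R A] [AddCommGroup M]
    [Module R M] [Module A M] (D : Derivation R A M) (f : σ → A) (p : MvPolynomial σ R) :
    D (aeval f p) = ∑ i, aeval f (pderiv i p) • D (f i) := by
  classical
  induction p using MvPolynomial.induction_on with
  | C a => simp
  | add p q hp hq => simp only [map_add, hp, hq, add_smul, Finset.sum_add_distrib]
  | mul_X p m hp =>
    simp only [map_mul, map_add, aeval_X, Derivation.leibniz, hp, smul_eq_mul, pderiv_X, add_smul,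
      Finset.sum_add_distrib, Finset.smul_sum, mul_smul]
    simp [Pi.single_apply]

variable [Fintype σ]

theorem monomial_eq_C_mul_prod (d : σ →₀ ℕ) (a : R) :
    monomial d a = C a * ∏ i, X i ^ d i := by
  rw [monomial_eq, Finsupp.prod_fintype _ _ fun _ => pow_zero _]

/-- The linear substitution `xᵢ ↦ ∑ⱼ Tᵢⱼ xⱼ`. -/
noncomputable def linSubst (T : Matrix σ σ R) : MvPolynomial σ R →ₐ[R] MvPolynomial σ R :=
  aeval fun i => ∑ j, C (T i j) * X j

theorem linSubst_linSubst (S T : Matrix σ σ R) (F : MvPolynomial σ R) :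
    linSubst S (linSubst T F) = linSubst (T * S) F := by
  rw [linSubst, linSubst, comp_aeval_apply, linSubst]
  congr 2
  funext i
  simp only [map_sum, map_mul, aeval_X, algHom_C, algebraMap_eq, Finset.mul_sum,
    Matrix.mul_apply, Finset.sum_mul]
  rw [Finset.sum_comm]
  simp only [mul_assoc]

theorem map_linSubst {S : Type*} [CommRing S] (f : R →+* S) (T : Matrix σ σ R)
    (F : MvPolynomial σ R) : map f (linSubst T F) = linSubst (T.map f) (map f F) := by
  induction F using MvPolynomial.induction_on with
  | C a => simp only [algHom_C, algebraMap_eq, map_C]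
  | add p q hp hq => simp only [map_add, hp, hq]
  | mul_X p i hp =>
    have hX : map f (linSubst T (X i)) = linSubst (T.map f) (X i) := by simp [linSubst]
    rw [map_mul, map_mul, map_mul, map_mul, hp, hX, map_X]

theorem isHomogeneous_linSubst {T : Matrix σ σ R} {F : MvPolynomial σ R} {d : ℕ}
    (hF : F.IsHomogeneous d) : (linSubst T F).IsHomogeneous d := by
  rw [← one_mul d]
  exact hF.aeval _ fun i => IsHomogeneous.sum _ _ _ fun j _ => isHomogeneous_C_mul_X _ _

theorem pderiv_linSubst (T : Matrix σ σ R) (F : MvPolynomial σ R) (j : σ) :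
    pderiv j (linSubst T F) = ∑ i, C (T i j) * linSubst T (pderiv i F) := by
  classical
  refine (derivation_aeval _ _ F).trans (Finset.sum_congr rfl fun i _ => ?_)
  have hX : pderiv j (∑ l, C (T i l) * X l) = C (T i j) := by simp [Pi.single_apply]
  rw [hX, smul_eq_mul, mul_comm, linSubst]

variable [DecidableEq σ]

/-- The Hessian determinant, that is the Jacobian determinant of the partial derivatives. -/
noncomputable def hessianDet (F : MvPolynomial σ R) : MvPolynomial σ R :=
  Matrix.det (Matrix.of fun i j => pderiv j (pderiv i F))

theorem hessianDet_linSubst (T : Matrix σ σ R) (F : MvPolynomial σ R) :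
    hessianDet (linSubst T F) = C (T.det ^ 2) * linSubst T (hessianDet F) := by
  have hessian_eq : Matrix.of (fun i j => pderiv j (pderiv i (linSubst T F)))
      = (T.map C).transpose *
        (linSubst T).mapMatrix (Matrix.of fun i j => pderiv j (pderiv i F)) * T.map C := by
    ext1 i j
    simp only [Matrix.of_apply, pderiv_linSubst, map_sum, pderiv_C_mul, Matrix.mul_apply,
      Matrix.transpose_apply, Matrix.map_apply, AlgHom.mapMatrix_apply, Finset.mul_sum,
      Finset.sum_mul]
    rw [Finset.sum_comm]
    exact Finset.sum_congr rfl fun _ _ => Finset.sum_congr rfl fun _ _ => by ring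
  have hT : (T.map (C : R →+* MvPolynomial σ R)).det = C T.det := (RingHom.map_det C T).symm
  rw [hessianDet, hessian_eq, Matrix.det_mul, Matrix.det_mul, Matrix.det_transpose,
    ← AlgHom.map_det, hT, map_pow, hessianDet]
  ring

theorem linSubst_one (F : MvPolynomial σ R) : linSubst 1 F = F := by
  have hX : (fun i : σ => ∑ j, C ((1 : Matrix σ σ R) i j) * X j) = X := by
    funext i
    simp [Matrix.one_apply]
  rw [linSubst, hX, aeval_X_left_apply]

theorem linSubst_permMatrix (e : Equiv.Perm σ) :
    linSubst (e.permMatrix R) = rename e := by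
  ext1 i
  simp [linSubst, Equiv.Perm.permMatrix, PEquiv.toMatrix_apply]

theorem linSubst_diagonal_monomial (t : σ → R) (d : σ →₀ ℕ) (a : R) :
    linSubst (Matrix.diagonal t) (monomial d a) = monomial d ((∏ i, t i ^ d i) * a) := by
  have hX (i : σ) : ∑ j, C (Matrix.diagonal t i j) * X j = C (t i) * (X i : MvPolynomial σ R) := by
    simp [Matrix.diagonal_apply, apply_ite C, ite_mul]
  rw [linSubst, aeval_monomial, monomial_eq_C_mul_prod,
    Finsupp.prod_fintype _ _ fun _ => pow_zero _]
  simp only [hX, mul_pow, Finset.prod_mul_distrib, ← map_pow, ← map_prod, algebraMap_eq, map_mul]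
  ring

end Hessian

/-! ### The Nanson matrix of a cubic form -/

section CubicForms

theorem degree_cubicExp (m : Fin 20) : (cubicExp m).degree = 3 := by
  rw [Finsupp.degree_eq_sum]
  revert m
  decide

theorem cubicExp_injective : Function.Injective cubicExp := by
  have h : ∀ m m', (∀ i, cubicExp m i = cubicExp m' i) → m = m' := by decide
  exact fun m m' hm => h m m' fun i => by rw [hm]

theorem exists_cubicExp_eq {d : Fin 4 →₀ ℕ} (hd : d.degree = 3) : ∃ m, cubicExp m = d := by
  rw [Finsupp.degree_eq_sum, Fin.sum_univ_four] at hd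
  have h : ∀ a b c e : Fin 4, (a : ℕ) + b + c + e = 3 →
      ∃ m, ∀ i, cubicExp m i = ![(a : ℕ), b, c, e] i := by decide
  obtain ⟨m, hm⟩ := h ⟨d 0, by omega⟩ ⟨d 1, by omega⟩ ⟨d 2, by omega⟩ ⟨d 3, by omega⟩ hd
  refine ⟨m, Finsupp.ext fun i => (hm i).trans ?_⟩
  fin_cases i <;> rfl

section CommRing

variable {R : Type*} [CommRing R]

/-- The cubic form with coefficient vector `g`. -/
noncomputable def cubicOf (g : Fin 20 → R) : MvPolynomial (Fin 4) R :=
  ∑ m, monomial (cubicExp m) (g m)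

/-- The coefficients of a quaternary polynomial at the twenty cubic monomials. -/
noncomputable def cubicCoeff : MvPolynomial (Fin 4) R →ₗ[R] Fin 20 → R :=
  LinearMap.pi fun m => lcoeff R (cubicExp m)

theorem cubicCoeff_cubicOf (g : Fin 20 → R) : cubicCoeff (cubicOf g) = g := by
  funext m
  simp [cubicCoeff, cubicOf, coeff_monomial, cubicExp_injective.eq_iff]

theorem isHomogeneous_cubicOf (g : Fin 20 → R) : (cubicOf g).IsHomogeneous 3 :=
  IsHomogeneous.sum _ _ _ fun m _ => isHomogeneous_monomial _ (degree_cubicExp m)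

theorem eq_of_cubicCoeff_eq {p q : MvPolynomial (Fin 4) R} (hp : p.IsHomogeneous 3)
    (hq : q.IsHomogeneous 3) (h : cubicCoeff p = cubicCoeff q) : p = q := by
  ext d
  by_cases hd : d.degree = 3
  · obtain ⟨m, rfl⟩ := exists_cubicExp_eq hd
    exact congrFun h m
  · rw [hp.coeff_eq_zero hd, hq.coeff_eq_zero hd]

theorem cubicOf_cubicCoeff {p : MvPolynomial (Fin 4) R} (hp : p.IsHomogeneous 3) :
    cubicOf (cubicCoeff p) = p :=
  eq_of_cubicCoeff_eq (isHomogeneous_cubicOf _) hp (cubicCoeff_cubicOf _)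

theorem isHomogeneous_det {σ n : Type*} [Fintype n] [DecidableEq n]
    {A : Matrix n n (MvPolynomial σ R)} {d : ℕ} (h : ∀ i j, (A i j).IsHomogeneous d) :
    A.det.IsHomogeneous (Fintype.card n * d) := by
  rw [Matrix.det_apply]
  refine IsHomogeneous.sum _ _ _ fun τ _ => ?_
  have hprod := IsHomogeneous.prod Finset.univ (fun i => A (τ i) i) (fun _ => d) fun i _ => h _ _
  rw [Finset.sum_const, Finset.card_univ, smul_eq_mul] at hprod
  rcases Int.units_eq_one_or (Equiv.Perm.sign τ) with hτ | hτ
  · simpa [hτ] using hprod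
  · simpa [hτ] using hprod.neg

theorem nansonRow_four_mul_add (Q : Fin 4 → MvPolynomial (Fin 4) R) (i j : Fin 4) :
    nansonRow Q ⟨4 * i + j, by omega⟩ = X j * Q i := by
  have hmod : (4 * (i : ℕ) + j) % 4 = j := by omega
  have hdiv : (4 * (i : ℕ) + j) / 4 = i := by omega
  rw [nansonRow, dif_pos (by change 4 * (i : ℕ) + j < 16; omega)]
  simp only [hmod, hdiv]

theorem nansonRow_sixteen_add (Q : Fin 4 → MvPolynomial (Fin 4) R) (i : Fin 4) :
    nansonRow Q ⟨16 + i, by omega⟩ =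
      pderiv i (Matrix.det (Matrix.of fun i j => pderiv j (Q i))) := by
  rw [nansonRow, dif_neg (by change ¬ 16 + (i : ℕ) < 16; omega)]
  simp only [Nat.add_sub_cancel_left]

/-- The span of the twenty cubics of Nanson's construction for the partial derivatives of `F`. -/
noncomputable def nansonSpan (F : MvPolynomial (Fin 4) R) : Submodule R (MvPolynomial (Fin 4) R) :=
  Submodule.span R (Set.range (nansonRow fun i => pderiv i F))

theorem nansonSpan_le_iff {F : MvPolynomial (Fin 4) R}
    {S : Submodule R (MvPolynomial (Fin 4) R)} :
    nansonSpan F ≤ S ↔ (∀ i j, X j * pderiv i F ∈ S) ∧ ∀ i, pderiv i (hessianDet F) ∈ S := by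
  rw [nansonSpan, Submodule.span_le, Set.range_subset_iff]
  refine ⟨fun h => ⟨fun i j => ?_, fun i => ?_⟩, fun h r => ?_⟩
  · rw [← nansonRow_four_mul_add fun i => pderiv i F]
    exact h _
  · rw [hessianDet, ← nansonRow_sixteen_add fun i => pderiv i F]
    exact h _
  · rw [nansonRow]
    split_ifs
    · exact h.1 _ _
    · exact h.2 _

theorem X_mul_pderiv_mem_nansonSpan (F : MvPolynomial (Fin 4) R) (i j : Fin 4) :
    X j * pderiv i F ∈ nansonSpan F :=
  (nansonSpan_le_iff.mp le_rfl).1 i j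

theorem pderiv_hessianDet_mem_nansonSpan (F : MvPolynomial (Fin 4) R) (i : Fin 4) :
    pderiv i (hessianDet F) ∈ nansonSpan F :=
  (nansonSpan_le_iff.mp le_rfl).2 i

theorem isHomogeneous_of_mem_nansonSpan {F : MvPolynomial (Fin 4) R} (hF : F.IsHomogeneous 3)
    {p : MvPolynomial (Fin 4) R} (hp : p ∈ nansonSpan F) : p.IsHomogeneous 3 :=
  (nansonSpan_le_iff (S := homogeneousSubmodule (Fin 4) R 3)).mpr
    ⟨fun _ _ => (isHomogeneous_X R _).mul hF.pderiv,
      fun _ => (isHomogeneous_det (d := 1) fun _ _ => hF.pderiv.pderiv).pderiv⟩ hp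

/-- The rank of the Nanson matrix of the partial derivatives of `F`. -/
noncomputable def nansonRank (F : MvPolynomial (Fin 4) R) : ℕ :=
  (nansonMatrix fun i => pderiv i F).rank

theorem map_nansonRow {S : Type*} [CommRing S] (f : R →+* S) (Q : Fin 4 → MvPolynomial (Fin 4) R)
    (r : Fin 20) : map f (nansonRow Q r) = nansonRow (fun i => map f (Q i)) r := by
  rw [nansonRow, nansonRow]
  split_ifs
  · simp
  · have hjac : (map f).mapMatrix (Matrix.of fun i j => pderiv j (Q i)) =
        Matrix.of fun i j => pderiv j (map f (Q i)) := Matrix.ext fun i j => pderiv_map.symm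
    rw [← pderiv_map, RingHom.map_det, hjac]

end CommRing

section Field

variable {K : Type*} [Field K]

theorem nansonRank_eq_finrank {F : MvPolynomial (Fin 4) K} (hF : F.IsHomogeneous 3) :
    nansonRank F = Module.finrank K (nansonSpan F) := by
  have hmap : (nansonSpan F).map cubicCoeff =
      Submodule.span K (Set.range (nansonMatrix fun i => pderiv i F).row) := by
    rw [nansonSpan, Submodule.map_span, ← Set.range_comp]
    rfl
  have hinj : Function.Injective (cubicCoeff.domRestrict (nansonSpan F)) := fun p q h =>
    Subtype.ext <| eq_of_cubicCoeff_eq (isHomogeneous_of_mem_nansonSpan hF p.2)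
      (isHomogeneous_of_mem_nansonSpan hF q.2) h
  rw [nansonRank, Matrix.rank_eq_finrank_span_row, ← hmap, ← LinearMap.finrank_range_of_inj hinj,
    LinearMap.range_domRestrict]

theorem nansonSpan_linSubst_le {T : Matrix (Fin 4) (Fin 4) K} (hT : T.det ≠ 0)
    (F : MvPolynomial (Fin 4) K) :
    nansonSpan (linSubst T F) ≤ (nansonSpan F).map (linSubst T).toLinearMap := by
  set S := (nansonSpan F).map (linSubst T).toLinearMap
  have hC (a : K) {p} (hp : p ∈ S) : C a * p ∈ S := by
    rw [← smul_eq_C_mul]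
    exact S.smul_mem _ hp
  have hX (j : Fin 4) : X j = ∑ l, C (T⁻¹ j l) * linSubst T (X l) := by
    have hinv : linSubst T (linSubst T⁻¹ (X j)) = X j := by
      rw [linSubst_linSubst, Matrix.nonsing_inv_mul _ (IsUnit.mk0 _ hT), linSubst_one]
    rw [← hinv, linSubst, linSubst, aeval_X]
    simp only [map_sum, map_mul, algHom_C, algebraMap_eq]
  refine nansonSpan_le_iff.mpr ⟨fun i j => ?_, fun i => ?_⟩
  · rw [pderiv_linSubst, Finset.mul_sum]
    refine S.sum_mem fun k _ => ?_
    rw [mul_left_comm, hX j, Finset.sum_mul]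
    refine hC _ (S.sum_mem fun l _ => ?_)
    rw [mul_assoc, ← map_mul]
    exact hC _ (Submodule.mem_map_of_mem (X_mul_pderiv_mem_nansonSpan F k l))
  · rw [hessianDet_linSubst, pderiv_C_mul, pderiv_linSubst]
    exact hC _ (S.sum_mem fun k _ =>
      hC _ (Submodule.mem_map_of_mem (pderiv_hessianDet_mem_nansonSpan F k)))

theorem nansonRank_linSubst_le {T : Matrix (Fin 4) (Fin 4) K} (hT : T.det ≠ 0)
    {F : MvPolynomial (Fin 4) K} (hF : F.IsHomogeneous 3) :
    nansonRank (linSubst T F) ≤ nansonRank F := by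
  have : Module.Finite K (nansonSpan F) := Module.Finite.span_of_finite K (Set.finite_range _)
  rw [nansonRank_eq_finrank hF, nansonRank_eq_finrank (isHomogeneous_linSubst hF)]
  exact (Submodule.finrank_mono (nansonSpan_linSubst_le hT F)).trans
    (Submodule.finrank_map_le _ _)

end Field

section NansonMinorsIdeal

variable {K : Type*} [Field K] [Algebra ℂ K]

theorem map_aeval_genericNansonMatrix (g : Fin 20 → K) :
    genericNansonMatrix.map (aeval g) = nansonMatrix fun i => pderiv i (cubicOf g) := by
  let φ : MvPolynomial (Fin 20) ℂ →+* K := (aeval g : MvPolynomial (Fin 20) ℂ →ₐ[ℂ] K)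
  have hcubic : map φ genericCubic = cubicOf g := by
    simp [φ, genericCubic, cubicOf, map_monomial]
  ext r c
  have hrow := map_nansonRow φ (fun i => pderiv i genericCubic) r
  simp only [← pderiv_map, hcubic] at hrow
  exact (coeff_map _ _ _).symm.trans (congrArg _ hrow)

theorem mem_zeroLocus_nansonMinorsIdeal {g : Fin 20 → K} {k : ℕ} :
    g ∈ zeroLocus K (nansonMinorsIdeal k) ↔ nansonRank (cubicOf g) < 20 - k + 1 := by
  have hdet (r c : Fin (20 - k + 1) → Fin 20) :
      aeval g (genericNansonMatrix.submatrix r c).det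
        = ((nansonMatrix fun i => pderiv i (cubicOf g)).submatrix r c).det := by
    rw [← map_aeval_genericNansonMatrix, AlgHom.map_det]
    rfl
  rw [nansonRank, rank_lt_iff_forall_minor_eq_zero, nansonMinorsIdeal, zeroLocus_span]
  simp only [Set.mem_ofPred_eq, Set.forall_mem_range, Prod.forall, hdet]

theorem cubicCoeff_linSubst_mem_zeroLocus {T : Matrix (Fin 4) (Fin 4) K} (hT : T.det ≠ 0)
    {g : Fin 20 → K} {k : ℕ} (hg : g ∈ zeroLocus K (nansonMinorsIdeal k)) :
    cubicCoeff (linSubst T (cubicOf g)) ∈ zeroLocus K (nansonMinorsIdeal k) := by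
  have hF := isHomogeneous_cubicOf g
  rw [mem_zeroLocus_nansonMinorsIdeal] at hg ⊢
  rw [cubicOf_cubicCoeff (isHomogeneous_linSubst hF)]
  exact (nansonRank_linSubst_le hT hF).trans_lt hg

/-- The weight of the monomial with exponent vector `cubicExp m` when `xᵢ` has weight `w i`. -/
noncomputable def cubicWeight (w : Fin 4 → ℤ) (m : Fin 20) : ℤ := ∑ i, w i * cubicExp m i

theorem isScaleInvariant_nansonMinorsIdeal (k : ℕ) (w : Fin 4 → ℤ) :
    IsScaleInvariant (nansonMinorsIdeal k) (cubicWeight w) := by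
  intro K _ _ g hg τ hτ
  have hT : (Matrix.diagonal fun i => τ ^ w i : Matrix _ _ K).det ≠ 0 := by
    rw [Matrix.det_diagonal]
    exact Finset.prod_ne_zero_iff.mpr fun i _ => zpow_ne_zero _ hτ
  have hweight (m : Fin 20) : ∏ i, (τ ^ w i) ^ cubicExp m i = τ ^ cubicWeight w m := by
    simp only [cubicWeight, Fin.sum_univ_four, Fin.prod_univ_four, zpow_add₀ hτ, zpow_mul,
      zpow_natCast]
  have hcoeff : cubicCoeff (linSubst (Matrix.diagonal fun i => τ ^ w i) (cubicOf g)) =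
      fun m => τ ^ cubicWeight w m * g m := by
    rw [cubicOf, map_sum]
    simp only [linSubst_diagonal_monomial, hweight]
    exact cubicCoeff_cubicOf fun m => τ ^ cubicWeight w m * g m
  exact hcoeff ▸ cubicCoeff_linSubst_mem_zeroLocus hT hg

theorem HasPoint.perm {k : ℕ} {Z N : Finset (Fin 20)} {r : ℕ}
    (h : HasPoint (nansonMinorsIdeal k) Z N r) {σ : Equiv.Perm (Fin 4)} {e : Equiv.Perm (Fin 20)}
    (he : ∀ m i, cubicExp (e m) (σ i) = cubicExp m i) :
    HasPoint (nansonMinorsIdeal k) (Z.map e.toEmbedding) (N.map e.toEmbedding) r := by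
  obtain ⟨K, _, _, g, hg, hZ, hN, hr⟩ := h
  have hexp (m : Fin 20) : (cubicExp m).mapDomain σ = cubicExp (e m) := by
    ext i
    obtain ⟨j, rfl⟩ := σ.surjective i
    rw [Finsupp.mapDomain_apply σ.injective, he]
  have hT : (σ.permMatrix K).det ≠ 0 := by
    rw [Matrix.det_permutation]
    rcases Int.units_eq_one_or (Equiv.Perm.sign σ) with h | h <;> simp [h]
  have hcoeff : cubicCoeff (linSubst (σ.permMatrix K) (cubicOf g)) = g ∘ e.symm := by
    rw [linSubst_permMatrix, cubicOf, map_sum, ← cubicCoeff_cubicOf (g ∘ e.symm), cubicOf]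
    simp only [rename_monomial, hexp]
    rw [← Equiv.sum_comp e fun m => monomial (cubicExp m) ((g ∘ e.symm) m)]
    simp
  refine ⟨K, _, _, g ∘ e.symm, hcoeff ▸ cubicCoeff_linSubst_mem_zeroLocus hT hg, ?_, ?_, ?_⟩
  · exact Finset.forall_mem_map.mpr fun m hm => by simpa using hZ m hm
  · exact Finset.forall_mem_map.mpr fun m hm => by simpa using hN m hm
  · rwa [pointTrdeg, EquivLike.range_comp]

end NansonMinorsIdeal

end CubicForms

/-! ### The kernel of the Nanson matrix -/

section Kernel

variable {K : Type*} [CommRing K]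

/-- The linear functional on cubic forms with values `v` on the twenty monomials. -/
noncomputable def cubicPairing (v : Fin 20 → K) : MvPolynomial (Fin 4) K →ₗ[K] K :=
  (Fintype.linearCombination K v).comp cubicCoeff

theorem cubicPairing_apply (v : Fin 20 → K) (p : MvPolynomial (Fin 4) K) :
    cubicPairing v p = ∑ m, coeff (cubicExp m) p * v m := rfl

/-- The monomial `x₀ᵃ x₁ᵇ x₂ᶜ x₃ᵈ`. -/
noncomputable def xPow (a b c d : ℕ) : MvPolynomial (Fin 4) K :=
  monomial (Finsupp.equivFunOnFinite.symm ![a, b, c, d]) 1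

/-- `cubicExp` numbers the monomials of degree three by the combinatorial number system. -/
@[simp]
theorem cubicPairing_xPow (v : Fin 20 → K) {a b c d : ℕ} (h : a + b + c + d = 3) :
    cubicPairing v (xPow a b c d) =
      v ⟨((b + c + d + 2).choose 3 + (c + d + 1).choose 2 + d) % 20, Nat.mod_lt _ (by decide)⟩ := by
  have hexp : ∀ a b c d : Fin 4, (a : ℕ) + b + c + d = 3 → ∀ i,
      cubicExp ⟨((b + c + d + 2 : ℕ).choose 3 + (c + d + 1 : ℕ).choose 2 + d) % 20,
        Nat.mod_lt _ (by decide)⟩ i =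
        ![(a : ℕ), b, c, d] i := by decide
  have hm := Finsupp.ext (g := Finsupp.equivFunOnFinite.symm ![a, b, c, d])
    (hexp ⟨a, by omega⟩ ⟨b, by omega⟩ ⟨c, by omega⟩ ⟨d, by omega⟩ h)
  rw [xPow, ← hm, cubicPairing_apply]
  simp [coeff_monomial, cubicExp_injective.eq_iff]

theorem X_eq_xPow :
    X 0 = (xPow 1 0 0 0 : MvPolynomial (Fin 4) K) ∧ X 1 = (xPow 0 1 0 0 : MvPolynomial (Fin 4) K) ∧
    X 2 = (xPow 0 0 1 0 : MvPolynomial (Fin 4) K) ∧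
    X 3 = (xPow 0 0 0 1 : MvPolynomial (Fin 4) K) := by
  refine ⟨?_, ?_, ?_, ?_⟩ <;>
  · refine congrArg (monomial · 1) (Finsupp.ext fun j => ?_)
    fin_cases j <;> simp

@[simp]
theorem xPow_mul (a b c d a' b' c' d' : ℕ) :
    (xPow a b c d * xPow a' b' c' d' : MvPolynomial (Fin 4) K) =
      xPow (a + a') (b + b') (c + c') (d + d') := by
  rw [xPow, xPow, monomial_mul, mul_one]
  refine congrArg (monomial · 1) (Finsupp.ext fun j => ?_)
  fin_cases j <;> simp

@[simp]
theorem xPow_pow (a b c d n : ℕ) :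
    (xPow a b c d ^ n : MvPolynomial (Fin 4) K) = xPow (n * a) (n * b) (n * c) (n * d) := by
  rw [xPow, monomial_pow, one_pow]
  refine congrArg (monomial · 1) (Finsupp.ext fun j => ?_)
  fin_cases j <;> simp

@[simp]
theorem pderiv_xPow (a b c d : ℕ) :
    pderiv 0 (xPow a b c d : MvPolynomial (Fin 4) K) = (a : K) • xPow (a - 1) b c d ∧
    pderiv 1 (xPow a b c d : MvPolynomial (Fin 4) K) = (b : K) • xPow a (b - 1) c d ∧
    pderiv 2 (xPow a b c d : MvPolynomial (Fin 4) K) = (c : K) • xPow a b (c - 1) d ∧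
    pderiv 3 (xPow a b c d : MvPolynomial (Fin 4) K) = (d : K) • xPow a b c (d - 1) := by
  refine ⟨?_, ?_, ?_, ?_⟩ <;>
  · rw [xPow, pderiv_monomial, xPow, smul_monomial, smul_eq_mul, mul_comm]
    refine congrArg (monomial · _) (Finsupp.ext fun j => ?_)
    fin_cases j <;> simp

theorem det_fin_four {R : Type*} [CommRing R] (A : Matrix (Fin 4) (Fin 4) R) :
    A.det =
      A 0 0 * (A 1 1 * (A 2 2 * A 3 3 - A 2 3 * A 3 2) - A 1 2 * (A 2 1 * A 3 3 - A 2 3 * A 3 1)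
        + A 1 3 * (A 2 1 * A 3 2 - A 2 2 * A 3 1))
      - A 0 1 * (A 1 0 * (A 2 2 * A 3 3 - A 2 3 * A 3 2) - A 1 2 * (A 2 0 * A 3 3 - A 2 3 * A 3 0)
        + A 1 3 * (A 2 0 * A 3 2 - A 2 2 * A 3 0))
      + A 0 2 * (A 1 0 * (A 2 1 * A 3 3 - A 2 3 * A 3 1) - A 1 1 * (A 2 0 * A 3 3 - A 2 3 * A 3 0)
        + A 1 3 * (A 2 0 * A 3 1 - A 2 1 * A 3 0))
      - A 0 3 * (A 1 0 * (A 2 1 * A 3 2 - A 2 2 * A 3 1) - A 1 1 * (A 2 0 * A 3 2 - A 2 2 * A 3 0)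
        + A 1 2 * (A 2 0 * A 3 1 - A 2 1 * A 3 0)) := by
  rw [Matrix.det_succ_row_zero]
  simp [Fin.sum_univ_four, Matrix.det_fin_three, Matrix.submatrix_apply, Fin.succAbove]
  ring

/-- The kernel of the Nanson matrix of the partial derivatives of `F`. -/
noncomputable def nansonKernel (F : MvPolynomial (Fin 4) K) : Submodule K (Fin 20 → K) :=
  LinearMap.ker (nansonMatrix fun i => pderiv i F).mulVecLin

theorem mem_nansonKernel {F : MvPolynomial (Fin 4) K} {v : Fin 20 → K} :
    v ∈ nansonKernel F ↔ (∀ i j, cubicPairing v (X j * pderiv i F) = 0) ∧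
      ∀ i, cubicPairing v (pderiv i (hessianDet F)) = 0 := by
  rw [nansonKernel, LinearMap.mem_ker, Matrix.mulVecLin_apply]
  refine Iff.trans ?_ (nansonSpan_le_iff (S := LinearMap.ker (cubicPairing v)))
  rw [nansonSpan, Submodule.span_le, Set.range_subset_iff]
  exact funext_iff

end Kernel

/-! ### Sparse cubics of high Nanson rank -/

section Families

variable {R : Type*} [CommRing R]

theorem pderiv_ofNat {σ : Type*} (i : σ) (n : ℕ) [n.AtLeastTwo] :
    pderiv i (ofNat(n) : MvPolynomial σ R) = 0 :=
  Derivation.map_natCast (pderiv i) n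

/-- Cubics whose section with the tangent plane `x₃ = 0` at `(1 : 0 : 0 : 0)` is the cuspidal cubic
`x₀x₂² + x₁³`. -/
noncomputable def cuspidalSectionCubic (b c d : R) : MvPolynomial (Fin 4) R :=
  X 0 ^ 2 * X 3 + X 0 * X 2 ^ 2 + X 1 ^ 3 + C b * X 1 * X 3 ^ 2 + C d * X 2 ^ 2 * X 3
    + C c * X 2 * X 3 ^ 2

theorem hessian_cuspidalSectionCubic (b c d : R) :
    Matrix.of (fun i j => pderiv j (pderiv i (cuspidalSectionCubic b c d))) =
      !![2 * X 3, 0, 2 * X 2, 2 * X 0;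
        0, 6 * X 1, 0, 2 * C b * X 3;
        2 * X 2, 0, 2 * X 0 + 2 * C d * X 3, 2 * C d * X 2 + 2 * C c * X 3;
        2 * X 0, 2 * C b * X 3, 2 * C d * X 2 + 2 * C c * X 3, 2 * C b * X 1 + 2 * C c * X 2] := by
  ext1 i j
  fin_cases i <;> fin_cases j <;> simp [cuspidalSectionCubic, pderiv_X, pderiv_ofNat] <;> try ring

theorem hessianDet_cuspidalSectionCubic (b c d : R) :
    hessianDet (cuspidalSectionCubic b c d) =
      (-48 : R) • (X 0 ^ 3 * X 1) - (48 * d) • (X 0 ^ 2 * X 1 * X 3)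
        + (48 * b) • (X 0 * X 1 ^ 2 * X 3) + (96 * d) • (X 0 * X 1 * X 2 ^ 2)
        + (144 * c) • (X 0 * X 1 * X 2 * X 3) - (16 * b ^ 2) • (X 0 * X 3 ^ 3)
        - (48 * b) • (X 1 ^ 2 * X 2 ^ 2) + (48 * b * d) • (X 1 ^ 2 * X 3 ^ 2)
        - (48 * c) • (X 1 * X 2 ^ 3) - (48 * d ^ 2) • (X 1 * X 2 ^ 2 * X 3)
        - (48 * c * d) • (X 1 * X 2 * X 3 ^ 2) - (48 * c ^ 2) • (X 1 * X 3 ^ 3)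
        + (16 * b ^ 2) • (X 2 ^ 2 * X 3 ^ 2) - (16 * b ^ 2 * d) • (X 3 ^ 4) := by
  rw [hessianDet, hessian_cuspidalSectionCubic, det_fin_four]
  simp only [Matrix.of_apply, Matrix.cons_val, smul_eq_C_mul, map_neg, map_mul, map_pow,
    map_ofNat (C : R →+* MvPolynomial (Fin 4) R)]
  ring

theorem nansonKernel_cuspidalSectionCubic_equations {b c d : R} {v : Fin 20 → R}
    (h : v ∈ nansonKernel (cuspidalSectionCubic b c d)) :
    2 * v 3 + v 7 = 0 ∧
    2 * v 6 + v 13 = 0 ∧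
    2 * v 8 + v 16 = 0 ∧
    2 * v 9 + v 17 = 0 ∧
    3 * v 4 + b * v 9 = 0 ∧
    3 * v 10 + b * v 15 = 0 ∧
    3 * v 11 + b * v 18 = 0 ∧
    3 * v 12 + b * v 19 = 0 ∧
    2 * v 2 + 2 * d * v 8 + c * v 9 = 0 ∧
    2 * v 5 + 2 * d * v 14 + c * v 15 = 0 ∧
    2 * v 7 + 2 * d * v 17 + c * v 18 = 0 ∧
    2 * v 8 + 2 * d * v 18 + c * v 19 = 0 ∧
    v 0 + 2 * b * v 6 + d * v 7 + 2 * c * v 8 = 0 ∧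
    v 1 + 2 * b * v 12 + d * v 13 + 2 * c * v 14 = 0 ∧
    v 2 + 2 * b * v 14 + d * v 16 + 2 * c * v 17 = 0 ∧
    v 3 + 2 * b * v 15 + d * v 17 + 2 * c * v 18 = 0 ∧
    -144 * v 1 - 96 * d * v 6 + 48 * b * v 12 + 96 * d * v 13 + 144 * c * v 14
      - 16 * b ^ 2 * v 19 = 0 ∧
    -48 * v 0 - 48 * d * v 3 + 96 * b * v 6 + 96 * d * v 7 + 144 * c * v 8 - 96 * b * v 13
      + 96 * b * d * v 15 - 48 * c * v 16 - 48 * d ^ 2 * v 17 - 48 * c * d * v 18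
      - 48 * c ^ 2 * v 19 = 0 ∧
    192 * d * v 5 + 144 * c * v 6 - 96 * b * v 11 - 144 * c * v 13 - 96 * d ^ 2 * v 14
      - 48 * c * d * v 15 + 32 * b ^ 2 * v 18 = 0 ∧
    -48 * d * v 1 + 48 * b * v 4 + 144 * c * v 5 - 48 * b ^ 2 * v 9 + 96 * b * d * v 12
      - 48 * d ^ 2 * v 13 - 96 * c * d * v 14 - 144 * c ^ 2 * v 15 + 32 * b ^ 2 * v 17
      - 64 * b ^ 2 * d * v 19 = 0 := by
  rw [mem_nansonKernel, hessianDet_cuspidalSectionCubic] at h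
  refine ⟨.trans ?_ (h.1 0 0), .trans ?_ (h.1 0 1), .trans ?_ (h.1 0 2), .trans ?_ (h.1 0 3),
    .trans ?_ (h.1 1 0), .trans ?_ (h.1 1 1), .trans ?_ (h.1 1 2), .trans ?_ (h.1 1 3),
    .trans ?_ (h.1 2 0), .trans ?_ (h.1 2 1), .trans ?_ (h.1 2 2), .trans ?_ (h.1 2 3),
    .trans ?_ (h.1 3 0), .trans ?_ (h.1 3 1), .trans ?_ (h.1 3 2), .trans ?_ (h.1 3 3),
    .trans ?_ (h.2 0), .trans ?_ (h.2 1), .trans ?_ (h.2 2), .trans ?_ (h.2 3)⟩ <;>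
  · simp [cuspidalSectionCubic, X_eq_xPow, ← smul_eq_C_mul, mul_add, Nat.choose]
    try ring

/-- Cubics whose section with the tangent plane `x₃ = 0` at `(1 : 0 : 0 : 0)` is the tacnodal cubic
`x₂ (x₀x₂ + x₁²)`. -/
noncomputable def tacnodalSectionCubic (b a : R) : MvPolynomial (Fin 4) R :=
  X 0 ^ 2 * X 3 + X 0 * X 2 ^ 2 + X 1 ^ 2 * X 2 + C b * X 1 * X 3 ^ 2 + C a * X 3 ^ 3

theorem hessian_tacnodalSectionCubic (b a : R) :
    Matrix.of (fun i j => pderiv j (pderiv i (tacnodalSectionCubic b a))) =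
      !![2 * X 3, 0, 2 * X 2, 2 * X 0;
        0, 2 * X 2, 2 * X 1, 2 * C b * X 3;
        2 * X 2, 2 * X 1, 2 * X 0, 0;
        2 * X 0, 2 * C b * X 3, 0, 2 * C b * X 1 + 6 * C a * X 3] := by
  ext1 i j
  fin_cases i <;> fin_cases j <;> simp [tacnodalSectionCubic, pderiv_X, pderiv_ofNat] <;> try ring

theorem hessianDet_tacnodalSectionCubic (b a : R) :
    hessianDet (tacnodalSectionCubic b a) =
      (-16 : R) • (X 0 ^ 3 * X 2) + (16 : R) • (X 0 ^ 2 * X 1 ^ 2)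
        - (16 * b) • (X 0 * X 1 * X 2 * X 3) + (48 * a) • (X 0 * X 2 * X 3 ^ 2)
        - (16 * b ^ 2) • (X 0 * X 3 ^ 3) - (16 * b) • (X 1 ^ 3 * X 3)
        - (48 * a) • (X 1 ^ 2 * X 3 ^ 2) - (16 * b) • (X 1 * X 2 ^ 3) - (48 * a) • (X 2 ^ 3 * X 3)
        + (16 * b ^ 2) • (X 2 ^ 2 * X 3 ^ 2) := by
  rw [hessianDet, hessian_tacnodalSectionCubic, det_fin_four]
  simp only [Matrix.of_apply, Matrix.cons_val, smul_eq_C_mul, map_neg, map_mul, map_pow,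
    map_ofNat (C : R →+* MvPolynomial (Fin 4) R)]
  ring

theorem nansonKernel_tacnodalSectionCubic_equations {b a : R} {v : Fin 20 → R}
    (h : v ∈ nansonKernel (tacnodalSectionCubic b a)) :
    2 * v 3 + v 7 = 0 ∧
    2 * v 6 + v 13 = 0 ∧
    2 * v 8 + v 16 = 0 ∧
    2 * v 9 + v 17 = 0 ∧
    2 * v 5 + b * v 9 = 0 ∧
    2 * v 11 + b * v 15 = 0 ∧
    2 * v 13 + b * v 18 = 0 ∧
    2 * v 14 + b * v 19 = 0 ∧
    2 * v 2 + v 4 = 0 ∧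
    2 * v 5 + v 10 = 0 ∧
    2 * v 7 + v 11 = 0 ∧
    2 * v 8 + v 12 = 0 ∧
    v 0 + 2 * b * v 6 + 3 * a * v 9 = 0 ∧
    v 1 + 2 * b * v 12 + 3 * a * v 15 = 0 ∧
    v 2 + 2 * b * v 14 + 3 * a * v 18 = 0 ∧
    v 3 + 2 * b * v 15 + 3 * a * v 19 = 0 ∧
    -48 * v 2 + 32 * v 4 - 16 * b * v 14 + 48 * a * v 18 - 16 * b ^ 2 * v 19 = 0 ∧
    32 * v 1 - 16 * b * v 8 - 48 * b * v 12 - 96 * a * v 15 - 16 * b * v 16 = 0 ∧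
    -16 * v 0 - 16 * b * v 6 + 48 * a * v 9 - 48 * b * v 13 - 144 * a * v 17
      + 32 * b ^ 2 * v 18 = 0 ∧
    -16 * b * v 5 + 96 * a * v 8 - 48 * b ^ 2 * v 9 - 16 * b * v 10 - 96 * a * v 12
      - 48 * a * v 16 + 32 * b ^ 2 * v 17 = 0 := by
  rw [mem_nansonKernel, hessianDet_tacnodalSectionCubic] at h
  refine ⟨.trans ?_ (h.1 0 0), .trans ?_ (h.1 0 1), .trans ?_ (h.1 0 2), .trans ?_ (h.1 0 3),
    .trans ?_ (h.1 1 0), .trans ?_ (h.1 1 1), .trans ?_ (h.1 1 2), .trans ?_ (h.1 1 3),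
    .trans ?_ (h.1 2 0), .trans ?_ (h.1 2 1), .trans ?_ (h.1 2 2), .trans ?_ (h.1 2 3),
    .trans ?_ (h.1 3 0), .trans ?_ (h.1 3 1), .trans ?_ (h.1 3 2), .trans ?_ (h.1 3 3),
    .trans ?_ (h.2 0), .trans ?_ (h.2 1), .trans ?_ (h.2 2), .trans ?_ (h.2 3)⟩ <;>
  · simp [tacnodalSectionCubic, X_eq_xPow, ← smul_eq_C_mul, mul_add, Nat.choose]
    try ring

/-- A cubic whose section with the tangent plane `x₃ = 0` at `(1 : 0 : 0 : 0)` is `x₀x₂²`, a double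
line and a line. -/
noncomputable def doubleLineSectionCubic : MvPolynomial (Fin 4) R :=
  X 0 ^ 2 * X 3 + X 0 * X 2 ^ 2 + X 1 ^ 2 * X 3 + X 3 ^ 3

theorem hessian_doubleLineSectionCubic :
    Matrix.of (fun i j => pderiv j (pderiv i (doubleLineSectionCubic : MvPolynomial (Fin 4) R))) =
      !![2 * X 3, 0, 2 * X 2, 2 * X 0;
        0, 2 * X 3, 0, 2 * X 1;
        2 * X 2, 0, 2 * X 0, 0;
        2 * X 0, 2 * X 1, 0, 6 * X 3] := by
  ext1 i j
  fin_cases i <;> fin_cases j <;> simp [doubleLineSectionCubic, pderiv_X, pderiv_ofNat] <;> try ring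

theorem hessianDet_doubleLineSectionCubic :
    hessianDet (doubleLineSectionCubic : MvPolynomial (Fin 4) R) =
      (-16 : R) • (X 0 ^ 3 * X 3) - (16 : R) • (X 0 * X 1 ^ 2 * X 3)
        + (48 : R) • (X 0 * X 3 ^ 3) + (16 : R) • (X 1 ^ 2 * X 2 ^ 2)
        - (48 : R) • (X 2 ^ 2 * X 3 ^ 2) := by
  rw [hessianDet, hessian_doubleLineSectionCubic, det_fin_four]
  simp only [Matrix.of_apply, Matrix.cons_val, smul_eq_C_mul, map_neg,
    map_ofNat (C : R →+* MvPolynomial (Fin 4) R)]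
  ring

theorem nansonKernel_doubleLineSectionCubic_equations {v : Fin 20 → R}
    (h : v ∈ nansonKernel doubleLineSectionCubic) :
    2 * v 3 + v 7 = 0 ∧
    2 * v 6 + v 13 = 0 ∧
    2 * v 8 + v 16 = 0 ∧
    2 * v 9 + v 17 = 0 ∧
    2 * v 6 = 0 ∧
    2 * v 12 = 0 ∧
    2 * v 14 = 0 ∧
    2 * v 15 = 0 ∧
    2 * v 2 = 0 ∧
    2 * v 5 = 0 ∧
    2 * v 7 = 0 ∧
    2 * v 8 = 0 ∧
    v 0 + v 4 + 3 * v 9 = 0 ∧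
    v 1 + v 10 + 3 * v 15 = 0 ∧
    v 2 + v 11 + 3 * v 18 = 0 ∧
    v 3 + v 12 + 3 * v 19 = 0 ∧
    -48 * v 3 - 16 * v 12 + 48 * v 19 = 0 ∧
    -32 * v 6 + 32 * v 13 = 0 ∧
    32 * v 11 - 96 * v 18 = 0 ∧
    -16 * v 0 - 16 * v 4 + 144 * v 9 - 96 * v 17 = 0 := by
  rw [mem_nansonKernel, hessianDet_doubleLineSectionCubic] at h
  refine ⟨.trans ?_ (h.1 0 0), .trans ?_ (h.1 0 1), .trans ?_ (h.1 0 2), .trans ?_ (h.1 0 3),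
    .trans ?_ (h.1 1 0), .trans ?_ (h.1 1 1), .trans ?_ (h.1 1 2), .trans ?_ (h.1 1 3),
    .trans ?_ (h.1 2 0), .trans ?_ (h.1 2 1), .trans ?_ (h.1 2 2), .trans ?_ (h.1 2 3),
    .trans ?_ (h.1 3 0), .trans ?_ (h.1 3 1), .trans ?_ (h.1 3 2), .trans ?_ (h.1 3 3),
    .trans ?_ (h.2 0), .trans ?_ (h.2 1), .trans ?_ (h.2 2), .trans ?_ (h.2 3)⟩ <;>
  · simp [doubleLineSectionCubic, X_eq_xPow, mul_add, Nat.choose]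
    try ring

/-- A cubic whose section with the tangent plane `x₃ = 0` at `(1 : 0 : 0 : 0)` is `x₁³ + x₂³`, three
lines through that point. -/
noncomputable def concurrentLinesSectionCubic : MvPolynomial (Fin 4) R :=
  X 0 ^ 2 * X 3 + X 1 ^ 3 + X 2 ^ 3 + X 3 ^ 3

theorem hessian_concurrentLinesSectionCubic :
    Matrix.of (fun i j => pderiv j (pderiv i
      (concurrentLinesSectionCubic : MvPolynomial (Fin 4) R))) =
      !![2 * X 3, 0, 0, 2 * X 0;
        0, 6 * X 1, 0, 0;
        0, 0, 6 * X 2, 0;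
        2 * X 0, 0, 0, 6 * X 3] := by
  ext1 i j
  fin_cases i <;> fin_cases j <;>
    simp [concurrentLinesSectionCubic, pderiv_X, pderiv_ofNat] <;> try ring

theorem hessianDet_concurrentLinesSectionCubic :
    hessianDet (concurrentLinesSectionCubic : MvPolynomial (Fin 4) R) =
      (-144 : R) • (X 0 ^ 2 * X 1 * X 2) + (432 : R) • (X 1 * X 2 * X 3 ^ 2) := by
  rw [hessianDet, hessian_concurrentLinesSectionCubic, det_fin_four]
  simp only [Matrix.of_apply, Matrix.cons_val, smul_eq_C_mul, map_neg,
    map_ofNat (C : R →+* MvPolynomial (Fin 4) R)]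
  ring

theorem nansonKernel_concurrentLinesSectionCubic_equations {v : Fin 20 → R}
    (h : v ∈ nansonKernel concurrentLinesSectionCubic) :
    2 * v 3 = 0 ∧
    2 * v 6 = 0 ∧
    2 * v 8 = 0 ∧
    2 * v 9 = 0 ∧
    3 * v 4 = 0 ∧
    3 * v 10 = 0 ∧
    3 * v 11 = 0 ∧
    3 * v 12 = 0 ∧
    3 * v 7 = 0 ∧
    3 * v 13 = 0 ∧
    3 * v 16 = 0 ∧
    3 * v 17 = 0 ∧
    v 0 + 3 * v 9 = 0 ∧
    v 1 + 3 * v 15 = 0 ∧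
    v 2 + 3 * v 18 = 0 ∧
    v 3 + 3 * v 19 = 0 ∧
    -288 * v 5 = 0 ∧
    -144 * v 2 + 432 * v 18 = 0 ∧
    -144 * v 1 + 432 * v 15 = 0 ∧
    864 * v 14 = 0 := by
  rw [mem_nansonKernel, hessianDet_concurrentLinesSectionCubic] at h
  refine ⟨.trans ?_ (h.1 0 0), .trans ?_ (h.1 0 1), .trans ?_ (h.1 0 2), .trans ?_ (h.1 0 3),
    .trans ?_ (h.1 1 0), .trans ?_ (h.1 1 1), .trans ?_ (h.1 1 2), .trans ?_ (h.1 1 3),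
    .trans ?_ (h.1 2 0), .trans ?_ (h.1 2 1), .trans ?_ (h.1 2 2), .trans ?_ (h.1 2 3),
    .trans ?_ (h.1 3 0), .trans ?_ (h.1 3 1), .trans ?_ (h.1 3 2), .trans ?_ (h.1 3 3),
    .trans ?_ (h.2 0), .trans ?_ (h.2 1), .trans ?_ (h.2 2), .trans ?_ (h.2 3)⟩ <;>
  · simp [concurrentLinesSectionCubic, X_eq_xPow, mul_add, Nat.choose]
    try ring

end Families

section Rank

variable {K : Type*} [Field K]

theorem finrank_le_card_of_forall_eq_zero {n : Type*} [Finite n] {W : Submodule K (n → K)}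
    {S : Finset n} (h : ∀ v ∈ W, (∀ m ∈ S, v m = 0) → v = 0) : Module.finrank K W ≤ S.card := by
  let restrict : W →ₗ[K] S → K := (LinearMap.funLeft K K Subtype.val).comp W.subtype
  have hinj : Function.Injective restrict :=
    LinearMap.ker_eq_bot.mp <| LinearMap.ker_eq_bot'.mpr fun v hv =>
      Subtype.ext (h v v.2 fun m hm => congrFun hv ⟨m, hm⟩)
  simpa using LinearMap.finrank_le_finrank_of_injective hinj

theorem nansonRank_add_finrank_nansonKernel (F : MvPolynomial (Fin 4) K) :
    nansonRank F + Module.finrank K (nansonKernel F) = 20 :=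
  (LinearMap.finrank_range_add_finrank_ker (nansonMatrix fun i => pderiv i F).mulVecLin).trans
    (by simp)

theorem twenty_le_nansonRank_add_card {F : MvPolynomial (Fin 4) K} {S : Finset (Fin 20)}
    (h : ∀ v ∈ nansonKernel F, (∀ m ∈ S, v m = 0) → v = 0) : 20 ≤ nansonRank F + S.card := by
  have hsum := nansonRank_add_finrank_nansonKernel F
  have hker := finrank_le_card_of_forall_eq_zero h
  omega

variable [CharZero K]

theorem nansonKernel_cuspidalSectionCubic_reduced_equations {b c d : K} {v : Fin 20 → K}
    (h : v ∈ nansonKernel (cuspidalSectionCubic b c d)) :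
    8 * b * v 14 + 9 * c * v 17 + 12 * d ^ 2 * v 18 + 6 * c * d * v 19 = 0 ∧
    8 * b * v 15 + 6 * d * v 17 + 9 * c * v 18 = 0 ∧
    27 * c * v 14 - 8 * b ^ 2 * v 19 - 36 * d * v 6 = 0 ∧
    8 * b * d * v 15 - 18 * d ^ 2 * v 17 - 39 * c * d * v 18 - 18 * c ^ 2 * v 19
      + 32 * b * v 6 = 0 ∧
    18 * d ^ 2 * v 14 + 9 * c * d * v 15 - 4 * b ^ 2 * v 18 - 27 * c * v 6 = 0 ∧
    18 * c * d * v 14 + 27 * c ^ 2 * v 15 - 8 * b ^ 2 * v 17 + 16 * b ^ 2 * d * v 19 = 0 := by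
  obtain ⟨e0, e1, e2, e3, e4, -, e6, e7, e8, e9, e10, e11, e12, e13, e14, e15, j0, j1, j2, j3⟩ :=
    nansonKernel_cuspidalSectionCubic_equations h
  refine ⟨?_, ?_, ?_, ?_, ?_, ?_⟩
  · linear_combination 4 * e14 - 2 * e8 - 4 * d * e2 + c * e3 + 6 * d * e11
  · linear_combination 4 * e15 - 2 * e0 + e10
  · linear_combination 1 / 16 * j0 + 9 * e13 - 7 * b * e7 - 15 * d * e1
  · linear_combination 1 / 12 * j1 + 4 * e12 + 2 * d * e0 - 7 * d * e10 + 4 * c * e2 + 8 * b * e1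
      - 14 * c * e11
  · linear_combination -1 / 16 * j2 + 6 * d * e9 - 2 * b * e6 - 9 * c * e1
  · linear_combination -1 / 8 * j3 - 6 * d * e13 + 2 * b * e4 + 9 * c * e9 - 4 * b ^ 2 * e3
      + 8 * b * d * e7

theorem eq_zero_of_mem_nansonKernel_cuspidalSectionCubic {b c d : K} {v : Fin 20 → K}
    (h : v ∈ nansonKernel (cuspidalSectionCubic b c d)) (h6 : v 6 = 0) (h14 : v 14 = 0)
    (h15 : v 15 = 0) (h17 : v 17 = 0) (h18 : v 18 = 0) (h19 : v 19 = 0) : v = 0 := by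
  obtain ⟨e0, e1, e2, e3, e4, e5, e6, e7, e8, e9, e10, e11, e12, e13, -⟩ :=
    nansonKernel_cuspidalSectionCubic_equations h
  funext i
  fin_cases i <;> simp only [Fin.reduceFinMk, Pi.zero_apply] <;> grind

theorem eighteen_le_nansonRank_cuspidalSectionCubic {b c d : K} (hne : b ≠ 0 ∨ c ≠ 0 ∨ d ≠ 0) :
    18 ≤ nansonRank (cuspidalSectionCubic b c d) := by
  suffices ∃ S : Finset (Fin 20), S.card = 2 ∧
      ∀ v ∈ nansonKernel (cuspidalSectionCubic b c d), (∀ m ∈ S, v m = 0) → v = 0 by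
    obtain ⟨S, hS, hker⟩ := this
    have := twenty_le_nansonRank_add_card hker
    omega
  by_cases hb : b = 0
  · subst hb
    by_cases hc : c = 0
    · subst hc
      have hd : d ≠ 0 := by simpa using hne
      refine ⟨{15, 19}, rfl, fun v hv h0 => ?_⟩
      obtain ⟨h15, h19⟩ : v 15 = 0 ∧ v 19 = 0 := by simpa using h0
      obtain ⟨e1, e2, e3, -, e5, -⟩ := nansonKernel_cuspidalSectionCubic_reduced_equations hv
      have h17 : v 17 = 0 := by simpa [hd] using e2
      have h18 : v 18 = 0 := by simpa [hd] using e1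
      have h6 : v 6 = 0 := by simpa [hd] using e3
      have h14 : v 14 = 0 := by simpa [hd] using e5
      exact eq_zero_of_mem_nansonKernel_cuspidalSectionCubic hv h6 h14 h15 h17 h18 h19
    · refine ⟨{14, 17}, rfl, fun v hv h0 => ?_⟩
      obtain ⟨h14, h17⟩ : v 14 = 0 ∧ v 17 = 0 := by simpa using h0
      obtain ⟨-, e2, -, e4, e5, e6⟩ := nansonKernel_cuspidalSectionCubic_reduced_equations hv
      have h18 : v 18 = 0 := by simpa [hc, h17] using e2
      have h19 : v 19 = 0 := by simpa [hc, h17, h18] using e4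
      have h15 : v 15 = 0 := by simpa [hc, h14] using e6
      have h6 : v 6 = 0 := by simpa [hc, h14, h15] using e5
      exact eq_zero_of_mem_nansonKernel_cuspidalSectionCubic hv h6 h14 h15 h17 h18 h19
  · refine ⟨{18, 19}, rfl, fun v hv h0 => ?_⟩
    obtain ⟨h18, h19⟩ : v 18 = 0 ∧ v 19 = 0 := by simpa using h0
    obtain ⟨e1, e2, -, e4, e5, e6⟩ := nansonKernel_cuspidalSectionCubic_reduced_equations hv
    have hcd : c * d ^ 2 * v 17 = 0 := by grind
    have hbcd : (81 * c ^ 2 * d + 16 * b ^ 3) * v 17 = 0 := by grind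
    have h17 : v 17 = 0 := by
      obtain (h | h) | h : (c = 0 ∨ d = 0) ∨ v 17 = 0 := by simpa using hcd
      · simpa [h, hb] using hbcd
      · simpa [h, hb] using hbcd
      · exact h
    have h15 : v 15 = 0 := by simpa [hb, h17, h18] using e2
    have h14 : v 14 = 0 := by simpa [hb, h17, h18, h19] using e1
    have h6 : v 6 = 0 := by simpa [hb, h17, h18, h19, h15] using e4
    exact eq_zero_of_mem_nansonKernel_cuspidalSectionCubic hv h6 h14 h15 h17 h18 h19

theorem nineteen_le_nansonRank_cuspidalSectionCubic {b c : K} (hne : b ≠ 0 ∨ c ≠ 0) :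
    19 ≤ nansonRank (cuspidalSectionCubic b c 0) := by
  refine Nat.le_of_add_le_add_right (b := 1)
    (twenty_le_nansonRank_add_card (S := {17}) fun v hv h0 => ?_)
  have h17 : v 17 = 0 := by simpa using h0
  obtain ⟨e1, e2, e3, e4, e5, e6⟩ := nansonKernel_cuspidalSectionCubic_reduced_equations hv
  by_cases hb : b = 0
  · have hc : c ≠ 0 := by simpa [hb] using hne
    have h18 : v 18 = 0 := by simpa [hb, hc, h17] using e2
    have h14 : v 14 = 0 := by simpa [hb, hc] using e3
    have h19 : v 19 = 0 := by simpa [hb, hc] using e4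
    have h6 : v 6 = 0 := by simpa [hb, hc] using e5
    have h15 : v 15 = 0 := by simpa [hb, hc] using e6
    exact eq_zero_of_mem_nansonKernel_cuspidalSectionCubic hv h6 h14 h15 h17 h18 h19
  · have h14 : v 14 = 0 := by simpa [hb, h17] using e1
    have h19 : v 19 = 0 := by simpa [hb, h14] using e3
    have h6 : v 6 = 0 := by simpa [hb, h19] using e4
    have h18 : v 18 = 0 := by simpa [hb, h6] using e5
    have h15 : v 15 = 0 := by simpa [hb, h17, h18] using e2
    exact eq_zero_of_mem_nansonKernel_cuspidalSectionCubic hv h6 h14 h15 h17 h18 h19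

theorem nansonKernel_tacnodalSectionCubic_reduced_equations {b a : K} {v : Fin 20 → K}
    (h : v ∈ nansonKernel (tacnodalSectionCubic b a)) :
    5 * b * v 15 + 8 * a * v 19 = 0 ∧
    16 * a * v 18 - 5 * b ^ 2 * v 19 = 0 ∧
    8 * a * v 15 + 5 * b * v 16 = 0 ∧
    16 * a * v 17 - 5 * b ^ 2 * v 18 = 0 ∧
    16 * a * v 16 - 5 * b ^ 2 * v 17 = 0 := by
  obtain ⟨e0, e1, e2, e3, e4, e5, e6, e7, e8, e9, e10, e11, e12, e13, e14, e15, j0, j1, j2, j3⟩ :=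
    nansonKernel_tacnodalSectionCubic_equations h
  refine ⟨?_, ?_, ?_, ?_, ?_⟩
  · linear_combination 8 / 3 * e15 - 4 / 3 * e0 + 2 / 3 * e10 - 1 / 3 * e5
  · linear_combination 1 / 24 * (j0 - 32 * e8 + 112 * e14 - 104 * b * e7)
  · linear_combination -1 / 24 * (j1 - 32 * e13 - 104 * b * e2 + 112 * b * e11)
  · linear_combination -1 / 12 * (j2 + 16 * e12 - 8 * b * e1 - 48 * a * e3 + 28 * b * e6)
  · linear_combination -1 / 12 * (j3 - 8 * b * e4 - 144 * a * e2 + 28 * b ^ 2 * e3 + 16 * b * e9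
      + 96 * a * e11)

theorem eq_zero_of_mem_nansonKernel_tacnodalSectionCubic {b a : K} {v : Fin 20 → K}
    (h : v ∈ nansonKernel (tacnodalSectionCubic b a)) (h15 : v 15 = 0) (h16 : v 16 = 0)
    (h17 : v 17 = 0) (h18 : v 18 = 0) (h19 : v 19 = 0) : v = 0 := by
  obtain ⟨e0, e1, e2, e3, e4, e5, e6, e7, e8, e9, e10, e11, e12, e13, e14, -⟩ :=
    nansonKernel_tacnodalSectionCubic_equations h
  funext i
  fin_cases i <;> simp only [Fin.reduceFinMk, Pi.zero_apply] <;> grind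

theorem nineteen_le_nansonRank_tacnodalSectionCubic {b a : K} (hne : b ≠ 0 ∨ a ≠ 0) :
    19 ≤ nansonRank (tacnodalSectionCubic b a) := by
  refine Nat.le_of_add_le_add_right (b := 1)
    (twenty_le_nansonRank_add_card (S := {19}) fun v hv h0 => ?_)
  have h19 : v 19 = 0 := by simpa using h0
  obtain ⟨e1, e2, e3, e4, e5⟩ := nansonKernel_tacnodalSectionCubic_reduced_equations hv
  by_cases hb : b = 0
  · have ha : a ≠ 0 := by simpa [hb] using hne
    have h15 : v 15 = 0 := by simpa [hb, ha] using e3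
    have h16 : v 16 = 0 := by simpa [hb, ha] using e5
    have h17 : v 17 = 0 := by simpa [hb, ha] using e4
    have h18 : v 18 = 0 := by simpa [hb, ha] using e2
    exact eq_zero_of_mem_nansonKernel_tacnodalSectionCubic hv h15 h16 h17 h18 h19
  · have h15 : v 15 = 0 := by simpa [hb, h19] using e1
    have h16 : v 16 = 0 := by simpa [hb, h15] using e3
    have h17 : v 17 = 0 := by simpa [hb, h16] using e5
    have h18 : v 18 = 0 := by simpa [hb, h17] using e4
    exact eq_zero_of_mem_nansonKernel_tacnodalSectionCubic hv h15 h16 h17 h18 h19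

theorem eighteen_le_nansonRank_doubleLineSectionCubic :
    18 ≤ nansonRank (doubleLineSectionCubic : MvPolynomial (Fin 4) K) := by
  refine Nat.le_of_add_le_add_right (b := 2)
    (twenty_le_nansonRank_add_card (S := {4, 10}) fun v hv h0 => ?_)
  obtain ⟨h4, h10⟩ : v 4 = 0 ∧ v 10 = 0 := by simpa using h0
  obtain ⟨e0, e1, e2, e3, e4, e5, e6, e7, e8, e9, e10, e11, e12, e13, e14, e15, -, -, j2, j3⟩ :=
    nansonKernel_doubleLineSectionCubic_equations hv
  funext i
  fin_cases i <;> simp only [Fin.reduceFinMk, Pi.zero_apply] <;> grind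

theorem twenty_le_nansonRank_concurrentLinesSectionCubic :
    20 ≤ nansonRank (concurrentLinesSectionCubic : MvPolynomial (Fin 4) K) := by
  refine twenty_le_nansonRank_add_card (S := ∅) fun v hv _ => ?_
  obtain ⟨e0, e1, e2, e3, e4, e5, e6, e7, e8, e9, e10, e11, e12, e13, e14, e15, j0, j1, j2, j3⟩ :=
    nansonKernel_concurrentLinesSectionCubic_equations hv
  funext i
  fin_cases i <;> simp only [Fin.reduceFinMk, Pi.zero_apply] <;> grind

end Rank

/-! ### Upper bounds -/

section UpperBound

theorem exists_perm_cubicExp (σ : Equiv.Perm (Fin 4)) :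
    ∃ e : Equiv.Perm (Fin 20), ∀ m i, cubicExp (e m) (σ i) = cubicExp m i := by
  have hexp (m : Fin 20) : ∃ m', cubicExp m' = (cubicExp m).mapDomain σ :=
    exists_cubicExp_eq (by rw [Finsupp.degree_mapDomain, degree_cubicExp])
  choose f hf using hexp
  have hinj : Function.Injective f := fun m m' h =>
    cubicExp_injective (Finsupp.mapDomain_injective σ.injective (by rw [← hf, ← hf, h]))
  refine ⟨Equiv.ofBijective f (Finite.injective_iff_bijective.mp hinj), fun m i => ?_⟩
  rw [Equiv.ofBijective_apply, hf, Finsupp.mapDomain_apply σ.injective]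

theorem HasPoint.permVars {k r : ℕ} {Z N Z' N' : Finset (Fin 20)}
    (h : HasPoint (nansonMinorsIdeal k) Z N r) (σ : Equiv.Perm (Fin 4))
    (hZ : ∀ m' ∈ Z', ∃ m ∈ Z, ∀ i, cubicExp m' (σ i) = cubicExp m i)
    (hN : ∀ m' ∈ N', ∃ m ∈ N, ∀ i, cubicExp m' (σ i) = cubicExp m i) :
    HasPoint (nansonMinorsIdeal k) Z' N' r := by
  obtain ⟨e, he⟩ := exists_perm_cubicExp σ
  have hsub {S S' : Finset (Fin 20)}
      (hS : ∀ m' ∈ S', ∃ m ∈ S, ∀ i, cubicExp m' (σ i) = cubicExp m i) :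
      S' ⊆ S.map e.toEmbedding := fun m' hm' => by
    obtain ⟨m, hm, hmm'⟩ := hS m' hm'
    refine Finset.mem_map.mpr ⟨m, hm, cubicExp_injective (Finsupp.ext fun j => ?_)⟩
    obtain ⟨i, rfl⟩ := σ.surjective j
    exact (he m i).trans (hmm' i).symm
  exact (h.perm he).mono (hsub hZ) (hsub hN) le_rfl

theorem HasPoint.slices {k r : ℕ} {Z N : Finset (Fin 20)} {S : Finset (Fin 20)}
    (h : HasPoint (nansonMinorsIdeal k) Z N (r + S.card)) (w : Fin 4 → ℤ)
    (hpos : ∀ m, m ∈ Z ∨ (m ∈ N ∧ cubicWeight w m = 0) ∨ (m ∉ N ∧ 0 < cubicWeight w m))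
    (hS : ∀ a ∈ S, 0 < cubicWeight w a) : HasPoint (nansonMinorsIdeal k) (S ∪ Z) N r := by
  induction S using Finset.induction_on generalizing r with
  | empty => simpa using h
  | insert a S ha ih =>
    rw [Finset.card_insert_of_notMem ha, ← add_assoc, add_right_comm] at h
    have hSZ := ih h fun b hb => hS b (Finset.mem_insert_of_mem hb)
    rw [Finset.insert_union]
    exact hSZ.slice (isScaleInvariant_nansonMinorsIdeal k w)
      (fun m => (hpos m).imp_left (Finset.mem_union_right S))
      (hS a (Finset.mem_insert_self a S))

theorem HasPoint.zero_or_one {k r : ℕ} {Z N : Finset (Fin 20)}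
    (h : HasPoint (nansonMinorsIdeal k) Z N (r + 1)) (a : Fin 20) (w : Fin 4 → ℤ)
    (ha : cubicWeight w a ≠ 0) (hN : ∀ m ∈ N, cubicWeight w m = 0) :
    HasPoint (nansonMinorsIdeal k) (insert a Z) N (r + 1) ∨
      HasPoint (nansonMinorsIdeal k) Z (insert a N) r :=
  h.normalise (isScaleInvariant_nansonMinorsIdeal k w) ha hN

theorem cubicOf_eq_sum {R : Type*} [CommRing R] {g : Fin 20 → R} {S : Finset (Fin 20)}
    (h : ∀ m ∉ S, g m = 0) : cubicOf g = ∑ m ∈ S, monomial (cubicExp m) (g m) :=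
  (Finset.sum_subset S.subset_univ fun m _ hm => by rw [h m hm, monomial_zero]).symm

theorem HasPoint.nansonRank_lt {k r : ℕ} {Z N S : Finset (Fin 20)}
    (h : HasPoint (nansonMinorsIdeal k) Z N r) (hr : 20 ≤ r + (Z ∪ N).card)
    (hZ : Disjoint Z S) (hN : N ⊆ S) :
    nansonRank (∑ m ∈ S, monomial (cubicExp m) (1 : ℂ)) < 20 - k + 1 := by
  have hmem := h.mem_zeroLocus_of_card_le hr (v := fun m => if m ∈ S then 1 else 0)
    (fun m hm => if_neg (Finset.disjoint_left.mp hZ hm)) (fun m hm => if_pos (hN hm))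
  rw [mem_zeroLocus_nansonMinorsIdeal, cubicOf_eq_sum fun m hm => if_neg hm] at hmem
  rwa [Finset.sum_congr rfl fun m hm => by rw [if_pos hm]] at hmem

theorem HasPoint.exists_nansonRank_lt {k r : ℕ} {Z N S : Finset (Fin 20)}
    (h : HasPoint (nansonMinorsIdeal k) Z N (r + 1)) (hS : ∀ m, m ∈ Z ∨ m ∈ N ∪ S) :
    ∃ (K : Type) (_ : Field K) (_ : CharZero K) (g : Fin 20 → K),
      nansonRank (cubicOf g) < 20 - k + 1 ∧ (∀ m ∉ N ∪ S, g m = 0) ∧ (∀ m ∈ N, g m = 1) ∧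
        ∃ m ∈ S, g m ≠ 0 := by
  obtain ⟨K, _, _, g, hI, hZ, hN, m, hmZ, hmN, hm⟩ := h.exists_ne_zero
  have : CharZero K := charZero_of_injective_algebraMap (algebraMap ℂ K).injective
  exact ⟨K, _, this, g, mem_zeroLocus_nansonMinorsIdeal.mp hI,
    fun m hm => hZ m ((hS m).resolve_right hm), hN, m,
    (Finset.mem_union.mp ((hS m).resolve_left hmZ)).resolve_left hmN, hm⟩

theorem cubicOf_eq_cuspidalSectionCubic {R : Type*} [CommRing R] {g : Fin 20 → R}
    (h0 : ∀ m, m ∉ ({3, 7, 10} ∪ {15, 18, 17} : Finset (Fin 20)) → g m = 0)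
    (h1 : ∀ m ∈ ({3, 7, 10} : Finset (Fin 20)), g m = 1) :
    cubicOf g = cuspidalSectionCubic (g 15) (g 18) (g 17) := by
  obtain ⟨h3, h7, h10⟩ : g 3 = 1 ∧ g 7 = 1 ∧ g 10 = 1 := by simpa using h1
  rw [cubicOf_eq_sum h0]
  simp [cuspidalSectionCubic, cubicExp, monomial_eq_C_mul_prod, Fin.prod_univ_four, h3, h7,
    h10]
  ring

theorem cubicOf_eq_tacnodalSectionCubic {R : Type*} [CommRing R] {g : Fin 20 → R}
    (h0 : ∀ m, m ∉ ({11, 3, 7} ∪ {15, 19} : Finset (Fin 20)) → g m = 0)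
    (h1 : ∀ m ∈ ({11, 3, 7} : Finset (Fin 20)), g m = 1) :
    cubicOf g = tacnodalSectionCubic (g 15) (g 19) := by
  obtain ⟨h11, h3, h7⟩ : g 11 = 1 ∧ g 3 = 1 ∧ g 7 = 1 := by simpa using h1
  rw [cubicOf_eq_sum h0]
  simp [tacnodalSectionCubic, cubicExp, monomial_eq_C_mul_prod, Fin.prod_univ_four, h3, h7,
    h11]
  ring

theorem not_hasPoint_of_disjoint_concurrentLines {k r : ℕ} {Z N : Finset (Fin 20)} (hk : 1 ≤ k)
    (hr : 20 ≤ r + (Z ∪ N).card) (hZ : Disjoint Z {3, 10, 16, 19}) (hN : N ⊆ {3, 10, 16, 19}) :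
    ¬ HasPoint (nansonMinorsIdeal k) Z N r := fun h => by
  have hlt := h.nansonRank_lt hr hZ hN
  have heq : ∑ m ∈ ({3, 10, 16, 19} : Finset (Fin 20)), monomial (cubicExp m) (1 : ℂ) =
      concurrentLinesSectionCubic := by
    simp [concurrentLinesSectionCubic, cubicExp, monomial_eq_C_mul_prod, Fin.prod_univ_four,
      add_assoc]
  rw [heq] at hlt
  have hge := twenty_le_nansonRank_concurrentLinesSectionCubic (K := ℂ)
  omega

/-- The coordinates `3`, `7`, `10` are those of `x₀²x₃`, `x₀x₂²`, `x₁³`. -/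
theorem HasPoint.stratify {k r : ℕ} (h : HasPoint (nansonMinorsIdeal k) ∅ ∅ (r + 18)) :
    HasPoint (nansonMinorsIdeal k) {0, 3} ∅ (r + 17) ∨
    HasPoint (nansonMinorsIdeal k) {0, 1, 2, 7} {3} (r + 14) ∨
    HasPoint (nansonMinorsIdeal k) {0, 1, 2, 4, 5, 10} {3, 7} (r + 11) ∨
    HasPoint (nansonMinorsIdeal k) {0, 1, 2, 4, 5} {3, 7, 10} (r + 10) := by
  have h := h.slices (r := r + 17) (S := {0}) ![1, 1, 1, 1] (by decide) (by decide)
  rcases h.zero_or_one 3 ![1, 1, 1, 1] (by decide) (by decide) with h | h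
  · exact .inl (h.mono (by decide) subset_rfl le_rfl)
  have h := h.slices (r := r + 14) (S := {1, 2}) ![-1, 3, 3, 2] (by decide) (by decide)
  rcases h.zero_or_one 7 ![-1, 3, 3, 2] (by decide) (by decide) with h | h
  · exact .inr <| .inl (h.mono (by decide) (by decide) le_rfl)
  have h := h.slices (r := r + 11) (S := {4, 5}) ![-2, 5, 1, 4] (by decide) (by decide)
  rcases h.zero_or_one 10 ![-2, 5, 1, 4] (by decide) (by decide) with h | h
  · exact .inr <| .inr <| .inl (h.mono (by decide) (by decide) le_rfl)
  · exact .inr <| .inr <| .inr (h.mono (by decide) (by decide) le_rfl)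

theorem not_hasPoint_three_of_x111_eq_zero :
    ¬ HasPoint (nansonMinorsIdeal 3) {0, 1, 2, 4, 5, 10} {3, 7} 11 := fun h => by
  rcases h.zero_or_one 11 ![-2, 5, 1, 4] (by decide) (by decide) with h | h
  · have hlt := h.nansonRank_lt (S := {3, 7, 12, 19}) (by decide) (by decide) (by decide)
    have heq : ∑ m ∈ ({3, 7, 12, 19} : Finset (Fin 20)), monomial (cubicExp m) (1 : ℂ) =
        doubleLineSectionCubic := by
      simp [doubleLineSectionCubic, cubicExp, monomial_eq_C_mul_prod, Fin.prod_univ_four,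
        add_assoc]
    rw [heq] at hlt
    have hge := eighteen_le_nansonRank_doubleLineSectionCubic (K := ℂ)
    omega
  · have h := h.slices (r := 1) (S := {6, 8, 9, 12, 13, 14, 16, 17, 18}) ![-4, -1, 2, 8]
      (by decide) (by decide)
    obtain ⟨K, _, _, g, hlt, h0, h1, hne⟩ := h.exists_nansonRank_lt (S := {15, 19}) (by decide)
    rw [cubicOf_eq_tacnodalSectionCubic h0 h1] at hlt
    have hge := nineteen_le_nansonRank_tacnodalSectionCubic (b := g 15) (a := g 19)
      (by simpa using hne)
    omega

theorem not_hasPoint_three_of_x022_eq_zero :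
    ¬ HasPoint (nansonMinorsIdeal 3) {0, 1, 2, 7} {3} 14 := fun h => by
  rcases h.zero_or_one 4 ![-1, 3, 3, 2] (by decide) (by decide) with h | h
  · exact not_hasPoint_of_disjoint_concurrentLines (by decide) (by decide) (by decide) (by decide) h
  · have h := h.slices (r := 11) (S := {5, 16}) ![-2, 1, 5, 4] (by decide) (by decide)
    exact not_hasPoint_three_of_x111_eq_zero
      (h.permVars (Equiv.swap 1 2) (by decide) (by decide))

theorem not_hasPoint_three_of_x003_eq_zero :
    ¬ HasPoint (nansonMinorsIdeal 3) {0, 3} ∅ 17 := fun h => by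
  rcases h.zero_or_one 1 ![1, 1, 1, 1] (by decide) (by decide) with h | h
  · exact not_hasPoint_of_disjoint_concurrentLines (Z := {0, 1, 2}) (N := ∅)
      (by decide) (by decide) (by decide) (by decide)
      (h.permVars (Equiv.swap 2 3) (by decide) (by decide))
  · have h := h.permVars (Equiv.swap 1 3) (Z' := {0, 1}) (N' := {3}) (by decide) (by decide)
    have h := h.slices (r := 14) (S := {2, 7}) ![-1, 3, 3, 2] (by decide) (by decide)
    exact not_hasPoint_three_of_x022_eq_zero (h.mono (by decide) subset_rfl le_rfl)

theorem not_hasPoint_three_of_x111_eq_one :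
    ¬ HasPoint (nansonMinorsIdeal 3) {0, 1, 2, 4, 5} {3, 7, 10} 10 := fun h => by
  have h := h.slices (r := 1) (S := {6, 8, 9, 11, 12, 13, 14, 16, 19}) ![-2, 0, 1, 4]
    (by decide) (by decide)
  obtain ⟨K, _, _, g, hlt, h0, h1, hne⟩ := h.exists_nansonRank_lt (S := {15, 18, 17}) (by decide)
  rw [cubicOf_eq_cuspidalSectionCubic h0 h1] at hlt
  have hge := eighteen_le_nansonRank_cuspidalSectionCubic (b := g 15) (c := g 18) (d := g 17)
    (by simpa using hne)
  omega

theorem not_hasPoint_three : ¬ HasPoint (nansonMinorsIdeal 3) ∅ ∅ 18 := fun h => by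
  rcases HasPoint.stratify (r := 0) h with h | h | h | h
  · exact not_hasPoint_three_of_x003_eq_zero h
  · exact not_hasPoint_three_of_x022_eq_zero h
  · exact not_hasPoint_three_of_x111_eq_zero h
  · exact not_hasPoint_three_of_x111_eq_one h

theorem not_hasPoint_two_of_x111_eq_one :
    ¬ HasPoint (nansonMinorsIdeal 2) {0, 1, 2, 4, 5} {3, 7, 10} 11 := fun h => by
  have h := h.slices (r := 1) (S := {6, 8, 9, 11, 12, 13, 14, 16, 17, 19}) ![-2, 0, 1, 4]
    (by decide) (by decide)
  obtain ⟨K, _, _, g, hlt, h0, h1, hne⟩ := h.exists_nansonRank_lt (S := {15, 18}) (by decide)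
  rw [cubicOf_eq_cuspidalSectionCubic (fun m hm => h0 m (by revert m; decide)) h1,
    h0 17 (by decide)] at hlt
  have hge := nineteen_le_nansonRank_cuspidalSectionCubic (b := g 15) (c := g 18)
    (by simpa using hne)
  omega

theorem not_hasPoint_two_of_x111_eq_zero :
    ¬ HasPoint (nansonMinorsIdeal 2) {0, 1, 2, 4, 5, 10} {3, 7} 12 := fun h => by
  have hlt := h.nansonRank_lt (S := {3, 7, 11, 19}) (by decide) (by decide) (by decide)
  have heq : ∑ m ∈ ({3, 7, 11, 19} : Finset (Fin 20)), monomial (cubicExp m) (1 : ℂ) =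
      tacnodalSectionCubic 0 1 := by
    simp [tacnodalSectionCubic, cubicExp, monomial_eq_C_mul_prod, Fin.prod_univ_four,
      add_assoc]
  rw [heq] at hlt
  have hge := nineteen_le_nansonRank_tacnodalSectionCubic (K := ℂ) (b := 0) (a := 1) (by simp)
  omega

theorem not_hasPoint_two : ¬ HasPoint (nansonMinorsIdeal 2) ∅ ∅ 19 := fun h => by
  rcases HasPoint.stratify (r := 1) h with h | h | h | h
  · exact not_hasPoint_of_disjoint_concurrentLines (Z := {0, 1}) (N := ∅)
      (by decide) (by decide) (by decide) (by decide)
      (h.permVars (Equiv.swap 1 3) (by decide) (by decide))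
  · exact not_hasPoint_of_disjoint_concurrentLines (by decide) (by decide) (by decide) (by decide) h
  · exact not_hasPoint_two_of_x111_eq_zero h
  · exact not_hasPoint_two_of_x111_eq_one h

theorem ringKrullDim_quotient_nansonMinorsIdeal_le {k r : ℕ}
    (h : ¬ HasPoint (nansonMinorsIdeal k) ∅ ∅ (r + 1)) :
    ringKrullDim (MvPolynomial (Fin 20) ℂ ⧸ nansonMinorsIdeal k) ≤ r := by
  by_contra! hlt
  obtain ⟨K, _, _, g, hg, hr⟩ := exists_pointTrdeg_ge (r := r + 1)
    (by exact_mod_cast ENat.WithBot.add_one_le_iff.mpr hlt)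
  exact h ⟨K, _, _, g, hg, by simp, by simp, hr⟩

theorem not_hasPoint_of_three_le {k : ℕ} (hk : 3 ≤ k) :
    ¬ HasPoint (nansonMinorsIdeal k) ∅ ∅ 18 := by
  rintro ⟨K, _, _, g, hg, hgr⟩
  refine not_hasPoint_three ⟨K, _, _, g, ?_, hgr⟩
  rw [mem_zeroLocus_nansonMinorsIdeal] at hg ⊢
  omega

end UpperBound

/-! ### Weighted order -/

section WeightedOrder

variable (R : Type*) {σ : Type*} [CommRing R] (w : σ → ℕ)

/-- The polynomials all of whose monomials have weight at least `n`, the variable `xᵢ` having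
weight `w i`. -/
noncomputable def weightGE (n : ℕ) : Submodule R (MvPolynomial σ R) :=
  restrictSupport R {d | n ≤ Finsupp.weight w d}

variable {R w}

theorem mem_weightGE {n : ℕ} {p : MvPolynomial σ R} :
    p ∈ weightGE R w n ↔ ∀ d, Finsupp.weight w d < n → coeff d p = 0 := by
  simp only [weightGE, mem_restrictSupport_iff, Set.subset_def, Finset.mem_coe, mem_support_iff,
    Set.mem_ofPred_eq, ← not_lt]
  exact forall_congr' fun _ => not_imp_not

theorem weightGE_anti {m n : ℕ} (h : m ≤ n) : weightGE R w n ≤ weightGE R w m :=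
  restrictSupport_mono _ fun _ hd => h.trans hd

theorem mul_mem_weightGE {a b : ℕ} {p q : MvPolynomial σ R} (hp : p ∈ weightGE R w a)
    (hq : q ∈ weightGE R w b) : p * q ∈ weightGE R w (a + b) := by
  refine restrictSupport_mono R ?_ ((restrictSupport_add R _ _).ge (Submodule.mul_mem_mul hp hq))
  rintro _ ⟨d, hd, e, he, rfl⟩
  simpa using add_le_add hd he

theorem prod_mem_weightGE {ι : Type*} {s : Finset ι} {n : ι → ℕ} {p : ι → MvPolynomial σ R}
    (h : ∀ i ∈ s, p i ∈ weightGE R w (n i)) : ∏ i ∈ s, p i ∈ weightGE R w (∑ i ∈ s, n i) := by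
  induction s using Finset.cons_induction with
  | empty => simp [mem_weightGE]
  | cons i s hi ih =>
    rw [Finset.prod_cons, Finset.sum_cons]
    exact mul_mem_weightGE (h i (by simp)) (ih fun j hj => h j (by simp [hj]))

theorem det_mem_weightGE {ι : Type*} [Fintype ι] [DecidableEq ι]
    {A : Matrix ι ι (MvPolynomial σ R)} {n : ι → ι → ℕ} {N : ℕ}
    (hA : ∀ i j, A i j ∈ weightGE R w (n i j)) (hN : ∀ e : Equiv.Perm ι, N ≤ ∑ i, n (e i) i) :
    A.det ∈ weightGE R w N := by
  rw [Matrix.det_apply]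
  refine Submodule.sum_mem _ fun e _ => ?_
  rw [Units.smul_def, ← Int.cast_smul_eq_zsmul R]
  exact Submodule.smul_mem _ _ (weightGE_anti (hN e) (prod_mem_weightGE fun i _ => hA _ _))

theorem pderiv_mem_weightGE {n : ℕ} {p : MvPolynomial σ R} (hp : p ∈ weightGE R w n) (i : σ) :
    pderiv i p ∈ weightGE R w (n - w i) := by
  rw [mem_weightGE] at hp ⊢
  intro d hd
  rw [coeff_pderiv, hp _ (by rw [map_add, Finsupp.weight_single, one_smul]; omega), zero_mul]

theorem monomial_mem_weightGE (d : σ →₀ ℕ) (a : R) :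
    monomial d a ∈ weightGE R w (Finsupp.weight w d) := by
  classical
  refine mem_weightGE.mpr fun e he => ?_
  rw [coeff_monomial, if_neg (by rintro rfl; exact he.false)]

end WeightedOrder

section Cuspidal

variable {K : Type*} [Field K]

theorem nansonRank_add_card_le_twenty {F : MvPolynomial (Fin 4) K} {S : Finset (Fin 20)}
    (h : ∀ p ∈ nansonSpan F, ∀ m ∈ S, coeff (cubicExp m) p = 0) : nansonRank F + S.card ≤ 20 := by
  have hmem (m : S) : Pi.single m.1 1 ∈ nansonKernel F := by
    have hpair {p} (hp : p ∈ nansonSpan F) : cubicPairing (Pi.single m.1 1) p = 0 := by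
      simpa [cubicPairing_apply, Pi.single_apply] using h p hp m m.2
    exact mem_nansonKernel.mpr ⟨fun i j => hpair (X_mul_pderiv_mem_nansonSpan F i j),
      fun i => hpair (pderiv_hessianDet_mem_nansonSpan F i)⟩
  have hli : LinearIndependent K fun m : S => (⟨Pi.single m.1 1, hmem m⟩ : nansonKernel F) :=
    .of_comp (nansonKernel F).subtype <|
      (Pi.linearIndependent_single_one (Fin 20) K).comp _ Subtype.val_injective
  have hcard := hli.fintype_card_le_finrank
  rw [Fintype.card_coe] at hcard
  have hsum := nansonRank_add_finrank_nansonKernel F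
  omega

/-- Such a cubic is `x₀q(x₂, x₃) + c(x₁, x₂, x₃)`. For the weights `0, 2, 3, 3` it has order at
least `6`, so the order of the forms spanning `nansonSpan` exceeds the weight of `x₀³` and
`x₀²x₁`. -/
theorem nansonRank_cubicOf_le_eighteen {g : Fin 20 → K} (hg : ∀ m < 7, g m = 0) :
    nansonRank (cubicOf g) ≤ 18 := by
  set w : Fin 4 → ℕ := ![0, 2, 3, 3]
  have weight_cubicExp (m) : Finsupp.weight w (cubicExp m) = ∑ i, cubicExp m i * w i := by
    simp [Finsupp.weight_apply, Finsupp.sum_fintype]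
  have hF : cubicOf g ∈ weightGE K w 6 := by
    refine Submodule.sum_mem _ fun m _ => ?_
    rcases lt_or_ge m 7 with hm | hm
    · simp [hg m hm]
    · refine weightGE_anti ?_ (monomial_mem_weightGE _ _)
      rw [weight_cubicExp]
      revert m
      decide
  have hHess : hessianDet (cubicOf g) ∈ weightGE K w 8 :=
    det_mem_weightGE (fun i j => pderiv_mem_weightGE (pderiv_mem_weightGE hF i) j) (by decide)
  have hspan : nansonSpan (cubicOf g) ≤ weightGE K w 3 := by
    refine nansonSpan_le_iff.mpr ⟨fun i j => ?_, fun i => ?_⟩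
    · rw [← zero_add 3]
      refine mul_mem_weightGE (mem_weightGE.mpr fun _ h => absurd h (Nat.not_lt_zero _))
        (weightGE_anti ?_ (pderiv_mem_weightGE hF i))
      revert i
      decide
    · refine weightGE_anti ?_ (pderiv_mem_weightGE hHess i)
      revert i
      decide
  have hrank := nansonRank_add_card_le_twenty (F := cubicOf g) (S := {0, 1}) fun p hp m hm =>
    mem_weightGE.mp (hspan hp) _ <| by
      rw [weight_cubicExp]
      revert m
      decide
  simpa using hrank

end Cuspidal

/-! ### The Jacobian criterion -/

section Jacobian

variable {k ι : Type*} [Field k] [DecidableEq ι]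

theorem totalDegree_pderiv_le {σ R : Type*} [CommSemiring R] (p : MvPolynomial σ R) (i : σ) :
    (pderiv i p).totalDegree ≤ p.totalDegree - 1 := by
  refine Finset.sup_le fun m hm => ?_
  rw [mem_support_iff, coeff_pderiv] at hm
  have hdeg := le_totalDegree (mem_support_iff.mpr (left_ne_zero_of_mul hm))
  rw [Finsupp.sum_add_index' (fun _ => rfl) (fun _ _ _ => rfl),
    Finsupp.sum_single_index rfl] at hdeg
  omega

theorem totalDegree_eq_zero_of_pderiv_eq_zero {σ R : Type*} [CommRing R] [IsDomain R] [CharZero R]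
    {p : MvPolynomial σ R} (h : ∀ i, pderiv i p = 0) : p.totalDegree = 0 := by
  refine (totalDegree_eq_zero_iff _ p).mpr fun m hm i => ?_
  by_contra hi
  have hmi : m - Finsupp.single i 1 + Finsupp.single i 1 = m :=
    tsub_add_cancel_of_le (by simpa [Nat.one_le_iff_ne_zero] using hi)
  have hcoeff := coeff_pderiv (i := i) p (m - Finsupp.single i 1)
  rw [h i, hmi, coeff_zero, zero_eq_mul] at hcoeff
  exact hcoeff.elim (mem_support_iff.mp hm) (Nat.cast_add_one_ne_zero _)

/-- Differentiating a relation of minimal degree gives a relation of smaller degree. -/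
theorem algebraicIndependent_of_jacobian [Fintype ι] [CharZero k] {f : ι → MvPolynomial ι k}
    (h : (Matrix.of fun i j => pderiv j (f i)).det ≠ 0) : AlgebraicIndependent k f := by
  rw [algebraicIndependent_iff]
  intro p
  induction hn : p.totalDegree using Nat.strong_induction_on generalizing p with
  | _ n ih =>
    intro hp
    have hpderiv : (fun i => aeval f (pderiv i p)) = 0 := by
      refine Matrix.eq_zero_of_vecMul_eq_zero h (funext fun j => ?_)
      have hchain := derivation_aeval (pderiv j) f p
      rw [hp, map_zero] at hchain
      exact hchain.symm
    have hdeg : p.totalDegree = 0 := by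
      by_contra hpos
      refine hpos (totalDegree_eq_zero_of_pderiv_eq_zero fun i => ?_)
      have hlt := totalDegree_pderiv_le p i
      exact ih _ (by omega) _ rfl (congrFun hpderiv i)
    rw [totalDegree_eq_zero_iff_eq_C.mp hdeg] at hp ⊢
    rwa [aeval_C, algebraMap_eq] at hp

open DualNumber in
theorem snd_eval₂Hom_add_single_eps (b : ι → k) (j : ι) (p : MvPolynomial ι k) :
    TrivSqZeroExt.snd (eval₂Hom (TrivSqZeroExt.inlHom k k)
      (fun i => TrivSqZeroExt.inl (b i) + (Pi.single j ε : ι → k[ε]) i) p) =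
      eval b (pderiv j p) := by
  set g : ι → k[ε] := fun i => TrivSqZeroExt.inl (b i) + (Pi.single j ε : ι → k[ε]) i
  have hg (i) : TrivSqZeroExt.fst (g i) = b i := by
    by_cases h : i = j <;> simp [g, Pi.single_apply, h]
  have hfst (q : MvPolynomial ι k) :
      TrivSqZeroExt.fst (eval₂Hom (TrivSqZeroExt.inlHom k k) g q) = eval b q := by
    induction q using MvPolynomial.induction_on with
    | C a => simp
    | add p q hp hq => simp only [map_add, TrivSqZeroExt.fst_add, hp, hq]
    | mul_X p i hp => simp only [map_mul, TrivSqZeroExt.fst_mul, hp, eval₂Hom_X', hg, eval_X]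
  induction p using MvPolynomial.induction_on with
  | C a => simp
  | add p q hp hq => simp only [map_add, TrivSqZeroExt.snd_add, hp, hq]
  | mul_X p i hp =>
    rw [map_mul, DualNumber.snd_mul, hfst, hp, eval₂Hom_X', hg, Derivation.leibniz]
    by_cases h : i = j
    · simp [g, h, mul_comm]
    · simp [g, h, mul_comm]

end Jacobian

/-! ### A family of cubic surfaces with an `A₂` singularity -/

section CuspidalFamily

variable {R : Type*} [CommRing R]

/-- The substitution `x₁ ↦ x₁ - s₀x₀`, `x₂ ↦ x₂ - s₁x₀ - s₃x₁`, `x₃ ↦ x₃ - s₂x₀ - s₄x₁`. -/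
noncomputable def shearMatrix (s : Fin 5 → R) : Matrix (Fin 4) (Fin 4) R :=
  !![1, 0, 0, 0; -s 0, 1, 0, 0; -s 1, -s 3, 1, 0; -s 2, -s 4, 0, 1]

theorem det_shearMatrix (s : Fin 5 → R) : (shearMatrix s).det = 1 := by
  rw [det_fin_four]
  simp [shearMatrix]

theorem shearMatrix_zero : shearMatrix (0 : Fin 5 → R) = 1 := by
  ext i j
  fin_cases i <;> fin_cases j <;> simp [shearMatrix]

/-- The general cubic `x₀q(x₂, x₃) + c(x₁, x₂, x₃)` with an `A₂` singularity at `(1 : 0 : 0 : 0)`,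
whose thirteen coefficients are the second block of parameters, sheared by the first block. -/
noncomputable def cuspidalCubic (u : Fin 5 ⊕ Fin 13 → R) : MvPolynomial (Fin 4) R :=
  linSubst (shearMatrix (u ∘ Sum.inl))
    (∑ l : Fin 13, monomial (cubicExp (Fin.natAdd 7 l)) (u (Sum.inr l)))

theorem map_shearMatrix {S : Type*} [CommRing S] (f : R →+* S) (s : Fin 5 → R) :
    (shearMatrix s).map f = shearMatrix (f ∘ s) := by
  ext i j
  fin_cases i <;> fin_cases j <;> simp [shearMatrix]

theorem map_cuspidalCubic {S : Type*} [CommRing S] (f : R →+* S) (u : Fin 5 ⊕ Fin 13 → R) :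
    map f (cuspidalCubic u) = cuspidalCubic (f ∘ u) := by
  rw [cuspidalCubic, map_linSubst, map_shearMatrix, map_sum]
  simp only [map_monomial]
  rfl

/-- Near `cuspidalBase`, to first order, the coefficient number `cuspidalCoord i` of the family
`cuspidalCubic` depends on the `i`-th parameter only. -/
def cuspidalCoord : Fin 5 ⊕ Fin 13 → Fin 20 :=
  Sum.elim ![4, 3, 2, 6, 5] (Fin.natAdd 7)

theorem cuspidalCoord_injective : Function.Injective cuspidalCoord := by
  decide

/-- The parameters of the cubic `x₀x₂x₃ + x₁³`. -/
def cuspidalBase : Fin 5 ⊕ Fin 13 → R :=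
  Sum.elim 0 (Pi.single 1 1 + Pi.single 3 1)

/-- The diagonal of the Jacobian matrix at `cuspidalBase` of the coefficients `cuspidalCoord` of the
family `cuspidalCubic`. -/
def cuspidalSpeed : Fin 5 ⊕ Fin 13 → R :=
  Sum.elim ![-3, -1, -1, -1, -1] 1

theorem map_cuspidalBase {S : Type*} [CommRing S] (f : R →+* S) (i : Fin 5 ⊕ Fin 13) :
    f (cuspidalBase i) = cuspidalBase i := by
  rcases i with i | i <;> simp [cuspidalBase, Pi.single_apply, apply_ite f]

theorem map_cuspidalSpeed {S : Type*} [CommRing S] (f : R →+* S) (i : Fin 5 ⊕ Fin 13) :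
    f (cuspidalSpeed i) = cuspidalSpeed i := by
  rcases i with i | i
  · fin_cases i <;> simp [cuspidalSpeed, map_ofNat f]
  · simp [cuspidalSpeed]

theorem linSubst_shearMatrix_single {e : R} (he : e ^ 2 = 0) (j : Fin 5) :
    linSubst (shearMatrix (Pi.single j e)) (X 0 * X 2 * X 3 + X 1 ^ 3) =
      X 0 * X 2 * X 3 + X 1 ^ 3 +
        monomial (cubicExp (cuspidalCoord (Sum.inl j))) (cuspidalSpeed (Sum.inl j) * e) := by
  have hC : (C e : MvPolynomial (Fin 4) R) ^ 2 = 0 := by rw [← C_pow, he, C_0]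
  have hX (i) : linSubst (shearMatrix (Pi.single j e)) (X i) =
      ∑ l, C (shearMatrix (Pi.single j e) i l) * X l := aeval_X _ _
  rw [monomial_eq_C_mul_prod]
  simp only [map_add, map_mul, map_pow, hX]
  fin_cases j <;>
    simp [Fin.sum_univ_four, Fin.prod_univ_four, shearMatrix, cuspidalCoord, cuspidalSpeed,
      cubicExp, map_ofNat C]
  · linear_combination (3 * X 1 * X 0 ^ 2 - C e * X 0 ^ 3) * hC
  all_goals ring

theorem sum_monomial_single (l : Fin 13) (a : R) :
    ∑ i : Fin 13, monomial (cubicExp (Fin.natAdd 7 i)) ((Pi.single l a : Fin 13 → R) i) =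
      monomial (cubicExp (Fin.natAdd 7 l)) a := by
  rw [Finset.sum_eq_single l (fun i _ hi => by simp [hi]) (by simp), Pi.single_eq_same]

theorem cuspidalCubic_base_add_single {e : R} (he : e ^ 2 = 0) (j : Fin 5 ⊕ Fin 13) :
    cuspidalCubic (cuspidalBase + Pi.single j e) =
      X 0 * X 2 * X 3 + X 1 ^ 3 + monomial (cubicExp (cuspidalCoord j)) (cuspidalSpeed j * e) := by
  have hbase : ∑ l : Fin 13, monomial (cubicExp (Fin.natAdd 7 l)) (cuspidalBase (Sum.inr l) : R)
      = X 0 * X 2 * X 3 + X 1 ^ 3 := by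
    simp only [cuspidalBase, Sum.elim_inr, Pi.add_apply, map_add, Finset.sum_add_distrib,
      sum_monomial_single]
    simp [cubicExp, monomial_eq_C_mul_prod, Fin.prod_univ_four]
  rcases j with j | j
  · have hshear : (cuspidalBase + Pi.single (Sum.inl j) e) ∘ Sum.inl =
        (Pi.single j e : Fin 5 → R) := by
      ext
      simp [cuspidalBase, Pi.single_apply]
    rw [← linSubst_shearMatrix_single he, cuspidalCubic, hshear, ← hbase]
    simp
  · have hshear : (cuspidalBase + Pi.single (Sum.inr j) e) ∘ Sum.inl = (0 : Fin 5 → R) := by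
      ext
      simp [cuspidalBase]
    have hsingle (l : Fin 13) : (Pi.single (Sum.inr j) e : Fin 5 ⊕ Fin 13 → R) (Sum.inr l) =
        (Pi.single j e : Fin 13 → R) l := by simp [Pi.single_apply]
    rw [cuspidalCubic, hshear, shearMatrix_zero, linSubst_one]
    simp only [Pi.add_apply, map_add, Finset.sum_add_distrib, hbase, hsingle, sum_monomial_single]
    simp [cuspidalCoord, cuspidalSpeed]

open DualNumber in
theorem eval_pderiv_cubicCoeff_cuspidalCubic {K : Type*} [Field K] (i j : Fin 5 ⊕ Fin 13) :
    eval (cuspidalBase : Fin 5 ⊕ Fin 13 → K)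
      (pderiv j (cubicCoeff (cuspidalCubic X) (cuspidalCoord i))) =
      Matrix.diagonal cuspidalSpeed i j := by
  let u : Fin 5 ⊕ Fin 13 → K[ε] :=
    fun i => TrivSqZeroExt.inl (cuspidalBase i) + (Pi.single j ε : Fin 5 ⊕ Fin 13 → K[ε]) i
  let φ : MvPolynomial (Fin 5 ⊕ Fin 13) K →+* K[ε] := eval₂Hom (TrivSqZeroExt.inlHom K K) u
  have hu : u = cuspidalBase + Pi.single j ε :=
    funext fun i => congrArg (· + _) (map_cuspidalBase (TrivSqZeroExt.inlHom K K) i)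
  have hcubic : map φ (cuspidalCubic X) =
      map (TrivSqZeroExt.inlHom K K) (X 0 * X 2 * X 3 + X 1 ^ 3) +
        monomial (cubicExp (cuspidalCoord j)) (cuspidalSpeed j * ε) := by
    have hφ : φ ∘ X = u := funext fun i => eval₂Hom_X' (TrivSqZeroExt.inlHom K K) u i
    rw [map_cuspidalCubic, hφ, hu, cuspidalCubic_base_add_single DualNumber.eps_pow_two]
    simp only [map_add, map_mul, map_pow, map_X]
  have hcoeff : φ (coeff (cubicExp (cuspidalCoord i)) (cuspidalCubic X)) = _ :=
    (coeff_map φ _ _).symm.trans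
      (congrArg (coeff (cubicExp (cuspidalCoord i))) hcubic)
  refine (snd_eval₂Hom_add_single_eps _ _ _).symm.trans ((congrArg _ hcoeff).trans ?_)
  have hspeed : TrivSqZeroExt.fst (cuspidalSpeed j : K[ε]) = cuspidalSpeed j :=
    map_cuspidalSpeed (TrivSqZeroExt.fstHom K K K : K[ε] →+* K) j
  simp only [coeff_add, coeff_map, coeff_monomial, cubicExp_injective.eq_iff,
    cuspidalCoord_injective.eq_iff, TrivSqZeroExt.snd_add]
  rcases eq_or_ne j i with rfl | h
  · simp [hspeed]
  · simp [h, h.symm]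

theorem algebraicIndependent_cuspidalCubic (K : Type*) [Field K] [CharZero K] :
    AlgebraicIndependent K fun i => cubicCoeff
      (cuspidalCubic (X : Fin 5 ⊕ Fin 13 → MvPolynomial (Fin 5 ⊕ Fin 13) K)) (cuspidalCoord i) := by
  refine algebraicIndependent_of_jacobian fun hdet => ?_
  have hjac := congrArg (eval (cuspidalBase : Fin 5 ⊕ Fin 13 → K)) hdet
  rw [RingHom.map_det, map_zero] at hjac
  have hdiag : (eval (cuspidalBase : Fin 5 ⊕ Fin 13 → K)).mapMatrix (Matrix.of fun i j =>
      pderiv j (cubicCoeff (cuspidalCubic X) (cuspidalCoord i))) =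
      Matrix.diagonal cuspidalSpeed := by
    ext i j
    exact eval_pderiv_cubicCoeff_cuspidalCubic i j
  rw [hdiag, Matrix.det_diagonal] at hjac
  simp [cuspidalSpeed, Fin.prod_univ_succ] at hjac

theorem sum_monomial_eq_cubicOf (c : Fin 13 → R) :
    ∑ l, monomial (cubicExp (Fin.natAdd 7 l)) (c l) = cubicOf (Fin.append (0 : Fin 7 → R) c) := by
  rw [cubicOf, Fin.sum_univ_add (a := 7) (b := 13)]
  simp

theorem nansonRank_cuspidalCubic_le {K : Type*} [Field K] (u : Fin 5 ⊕ Fin 13 → K) :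
    nansonRank (cuspidalCubic u) ≤ 18 := by
  rw [cuspidalCubic, sum_monomial_eq_cubicOf fun l => u (Sum.inr l)]
  refine (nansonRank_linSubst_le (by simp [det_shearMatrix]) (isHomogeneous_cubicOf _)).trans ?_
  exact nansonRank_cubicOf_le_eighteen fun m hm => Fin.append_left (0 : Fin 7 → K) _ ⟨m, hm⟩

theorem isHomogeneous_cuspidalCubic (u : Fin 5 ⊕ Fin 13 → R) :
    (cuspidalCubic u).IsHomogeneous 3 := by
  rw [cuspidalCubic, sum_monomial_eq_cubicOf fun l => u (Sum.inr l)]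
  exact isHomogeneous_linSubst (isHomogeneous_cubicOf _)

theorem eighteen_le_ringKrullDim_quotient_nansonMinorsIdeal_two :
    18 ≤ ringKrullDim (MvPolynomial (Fin 20) ℂ ⧸ nansonMinorsIdeal 2) := by
  let A := MvPolynomial (Fin 5 ⊕ Fin 13) ℂ
  let ι : A →ₐ[ℂ] FractionRing A := IsScalarTower.toAlgHom ℂ A (FractionRing A)
  let g : Fin 20 → A := cubicCoeff (cuspidalCubic X)
  have hcubic : cubicOf (ι ∘ g) = cuspidalCubic (ι ∘ X) := by
    have hg : ι ∘ g = cubicCoeff (cuspidalCubic (ι ∘ X)) := by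
      rw [← AlgHom.coe_toRingHom, ← map_cuspidalCubic]
      exact funext fun m => (coeff_map _ _ _).symm
    rw [hg, cubicOf_cubicCoeff (isHomogeneous_cuspidalCubic _)]
  have hzero : ι ∘ g ∈ zeroLocus (FractionRing A) (nansonMinorsIdeal 2) := by
    rw [mem_zeroLocus_nansonMinorsIdeal, hcubic]
    exact Nat.lt_succ_of_le (nansonRank_cuspidalCubic_le _)
  have htrdeg : 18 ≤ pointTrdeg ℂ (ι ∘ g) := by
    have hind : AlgebraicIndependent ℂ fun m : Set.range cuspidalCoord => g m :=
      (algebraicIndependent_equiv' (Equiv.ofInjective _ cuspidalCoord_injective) rfl).mp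
        (algebraicIndependent_cuspidalCubic ℂ)
    have hcard : 18 ≤ (Set.range cuspidalCoord).encard := by
      simpa using cuspidalCoord_injective.encard_range
    rw [pointTrdeg_comp (IsFractionRing.injective A (FractionRing A))]
    exact hcard.trans (encard_le_pointTrdeg hind)
  exact (WithBot.coe_le_coe.mpr htrdeg).trans (pointTrdeg_le_ringKrullDim_quotient hzero)

end CuspidalFamily

/-- The stratum `V₂` cut out by the 19 × 19 minors of Nanson's matrix has codimension
exactly 2 in ℙ¹⁹ (its affine cone has Krull dimension 18), and the strata `Vₖ` for
`k ≥ 3` have codimension at least 3 (affine cones of Krull dimension at most 17). -/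
theorem codim_V2_eq_two_and_codim_Vk_ge_three :
    ringKrullDim (MvPolynomial (Fin 20) ℂ ⧸ nansonMinorsIdeal 2) = 18 ∧
      ∀ k : ℕ, 3 ≤ k →
        ringKrullDim (MvPolynomial (Fin 20) ℂ ⧸ nansonMinorsIdeal k) ≤ 17 :=
  ⟨le_antisymm (ringKrullDim_quotient_nansonMinorsIdeal_le not_hasPoint_two)
      eighteen_le_ringKrullDim_quotient_nansonMinorsIdeal_two,
    fun _ hk => ringKrullDim_quotient_nansonMinorsIdeal_le (not_hasPoint_of_three_le hk)⟩
end

section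
/- Let F ∈ ℂ[x_0, x_1, x_2, x_3] be a nonzero homogeneous form of degree 3 such that every singular point of the projective surface V(F) ⊂ P^3(ℂ) is an ordinary node, i.e. at every nonzero p ∈ ℂ^4 with ∇F(p) = 0 the 4×4 Hessian matrix (∂^2F/∂x_i∂x_j)(p) has rank 3. Then V(F) has at most 4 singular points. In particular, the locus N_k of k-nodal cubic surfaces is empty for k > 4. -/
open MvPolynomial
open Module (finrank)
open LinearMap (BilinForm)
open scoped LinearAlgebra.Projectivization

/-!
Polarise `F` to the symmetric trilinear form `T x y z = ∂ₓ∂ᵧ∂_z F`, so that `T x x x = 6 F(x)`. By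
Euler's relation `p` is singular iff `T p p = 0`, and `T p` is the Hessian at `p`, so `p` is a node
iff `T p` has kernel spanned by `p`. The point is that at most five distinct nodes are linearly
independent; in dimension four this leaves room for only four. Rescale the nodes so that a linear
relation between them reads `∑ xᵢ = 0`.

* Nodes are not collinear: if `x + y + z = 0`, then `2 T x y = T (x + y) (x + y) = T z z = 0`.
* If a relation has three nonzero terms `x, y, z`, then at most two other terms remain. As `F`
  vanishes on the line joining two nodes, it vanishes at `u = x + y + z`, so that
  `6 T x y z = T u u u = 0`. Hence `x, y, z` span an isotropic space of dimension three for `T x`.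
  A form on a four-dimensional space whose kernel is a line has no such space, as `3 + 3 > 4 + 1`.
-/

section LinearAlgebra

theorem two_mul_card_le_finrank_add_finrank_ker {K V ι : Type*} [Field K] [AddCommGroup V]
    [Module K V] [FiniteDimensional K V] [Fintype ι] {B : BilinForm K V} {v : ι → V}
    (hv : LinearIndependent K v) (hB : ∀ i j, B (v i) (v j) = 0) :
    2 * Fintype.card ι ≤ finrank K V + finrank K (LinearMap.ker B) := by
  set W := Submodule.span K (Set.range v)
  have hW : finrank K W = Fintype.card ι := finrank_span_eq_card hv
  have isotropic : W ≤ B.orthogonal W := by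
    intro y hy x hx
    induction hx, hy using Submodule.span_induction₂ with
    | mem_mem x y hx hy =>
      obtain ⟨i, rfl⟩ := hx
      obtain ⟨j, rfl⟩ := hy
      exact hB i j
    | _ => simp_all
  calc 2 * Fintype.card ι = finrank K W + finrank K W := by rw [hW, two_mul]
    _ ≤ finrank K W + finrank K (B.orthogonal W) := by
      gcongr
      exact Submodule.finrank_mono isotropic
    _ = finrank K V + finrank K (W ⊓ B.ker : Submodule K V) :=
      BilinForm.finrank_add_finrank_orthogonal' W
    _ ≤ finrank K V + finrank K (LinearMap.ker B) := by
      gcongr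
      exact Submodule.finrank_mono inf_le_right

theorem linearIndepOn_of_card_le_two {R M ι : Type*} [Ring R] [IsDomain R] [AddCommGroup M]
    [Module R M] [Module.IsTorsionFree R M] {v : ι → M} {s : Finset ι} (hs : s.card ≤ 2)
    (h0 : ∀ i, v i ≠ 0) (hpair : Pairwise fun i j => LinearIndependent R ![v i, v j]) :
    LinearIndepOn R v (s : Set ι) := by
  classical
  obtain h | h | h : s.card = 0 ∨ s.card = 1 ∨ s.card = 2 := by lia
  · simp [Finset.card_eq_zero.1 h]
  · obtain ⟨i, rfl⟩ := Finset.card_eq_one.1 h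
    simpa using h0 i
  · obtain ⟨i, j, hij, rfl⟩ := Finset.card_eq_two.1 h
    rw [Finset.coe_pair, LinearIndepOn.pair_iff v hij]
    exact LinearIndependent.pair_iff.1 (hpair hij)

end LinearAlgebra

/-- Trilinear forms on `M`, encoded so that `T x` is the bilinear form `T x · ·`. The associated
cubic form is `x ↦ T x x x`. -/
abbrev TrilinearForm (R M : Type*) [CommSemiring R] [AddCommMonoid M] [Module R M] : Type _ :=
  M →ₗ[R] BilinForm R M

namespace TrilinearForm

section Symmetric

variable {R M ι : Type*} [CommSemiring R] [AddCommMonoid M] [Module R M]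
  {T : TrilinearForm R M} {p q r : M}

/-- Invariance under all permutations of the arguments, expressed through the two transpositions
of neighbouring arguments. -/
structure IsSymm (T : TrilinearForm R M) : Prop where
  left_comm : ∀ x y, T x y = T y x
  right_comm : ∀ x y z, T x y z = T x z y

/-- The cubic `T x x x = 0` has only ordinary nodes: for symmetric `T`, the condition `T p p = 0`
says that `p` is a singular point, and `T p` is the Hessian form there up to a scalar. -/
def IsNodal (T : TrilinearForm R M) : Prop :=
  ∀ p, p ≠ 0 → T p p = 0 → LinearMap.ker (T p) ≤ R ∙ p

theorem IsSymm.apply_mid_eq_zero (hT : T.IsSymm) (hp : T p p = 0) (q : M) : T p q p = 0 := by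
  rw [hT.right_comm, hp, LinearMap.zero_apply]

theorem IsSymm.apply_left_eq_zero (hT : T.IsSymm) (hp : T p p = 0) (q : M) : T q p p = 0 := by
  rw [hT.left_comm, hT.apply_mid_eq_zero hp]

theorem IsSymm.apply_add_add_self (hT : T.IsSymm) (hp : T p p = 0) (hq : T q q = 0)
    (hr : T r r = 0) : T (p + q + r) (p + q + r) (p + q + r) = 6 * T p q r := by
  have hprq : T p r q = T p q r := hT.right_comm p r q
  have hqrp : T q r p = T p q r := by rw [hT.right_comm, hT.left_comm]
  simp only [map_add, LinearMap.add_apply, hp, hq, hr, hT.apply_mid_eq_zero,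
    hT.apply_left_eq_zero, LinearMap.zero_apply, hT.left_comm q p, hT.left_comm r p,
    hT.left_comm r q, hprq, hqrp]
  ring

theorem IsSymm.apply_sum_self_eq_zero_of_card_le_two (hT : T.IsSymm) {w : ι → M}
    {s : Finset ι} (hs : s.card ≤ 2) (hw : ∀ i ∈ s, T (w i) (w i) = 0) :
    T (∑ i ∈ s, w i) (∑ i ∈ s, w i) (∑ i ∈ s, w i) = 0 := by
  simp only [map_sum, LinearMap.sum_apply]
  refine Finset.sum_eq_zero fun k hk => Finset.sum_eq_zero fun j hj =>
    Finset.sum_eq_zero fun i hi => ?_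
  have coincide : i = j ∨ i = k ∨ j = k := by
    by_contra! h
    exact hs.not_gt (Finset.two_lt_card.2 ⟨i, hi, j, hj, k, hk, h⟩)
  obtain h | h | h := coincide
  · rw [h, hw j hj, LinearMap.zero_apply]
  · rw [h, hT.apply_mid_eq_zero (hw k hk)]
  · rw [h, hT.apply_left_eq_zero (hw k hk)]

end Symmetric

variable {K V ι : Type*} [Field K] [AddCommGroup V] [Module K V] {T : TrilinearForm K V}
  {p q r : V}

theorem IsSymm.apply_eq_zero_of_add_add_eq_zero [NeZero (2 : K)] (hT : T.IsSymm)
    (hp : T p p = 0) (hq : T q q = 0) (hr : T r r = 0) (h : p + q + r = 0) : T p q = 0 := by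
  have hpq : T (p + q) (p + q) = (2 : K) • T p q := by
    simp only [map_add, LinearMap.add_apply, hp, hq, hT.left_comm q p]
    module
  have hpq0 : T (p + q) (p + q) = 0 := by simp [eq_neg_of_add_eq_zero_left h, hr]
  exact (smul_eq_zero_iff_right two_ne_zero).1 (hpq.symm.trans hpq0)

theorem IsSymm.apply_eq_zero_of_sum_eq_zero [NeZero (2 : K)] [NeZero (3 : K)] [Fintype ι]
    (hT : T.IsSymm) (hι : Fintype.card ι ≤ 5) {w : ι → V} (hw : ∀ i, T (w i) (w i) = 0)
    (hsum : ∑ i, w i = 0) {i j k : ι} (hij : i ≠ j) (hik : i ≠ k) (hjk : j ≠ k) :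
    T (w i) (w j) (w k) = 0 := by
  classical
  set s : Finset ι := {i, j, k}
  have hs : s.card = 3 := Finset.card_eq_three.2 ⟨i, j, k, hij, hik, hjk, rfl⟩
  have hsc : sᶜ.card ≤ 2 := by rw [Finset.card_compl]; lia
  set u := ∑ l ∈ sᶜ, w l
  have hu : T u u u = 0 := hT.apply_sum_self_eq_zero_of_card_le_two hsc fun l _ => hw l
  have hwu : w i + w j + w k = -u := by
    rw [eq_neg_iff_add_eq_zero, ← hsum, ← Finset.sum_add_sum_compl s]
    simp [s, hij, hik, hjk, add_assoc, u]
  have h6 : (6 : K) ≠ 0 := by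
    rw [show (6 : K) = 2 * 3 by norm_num]
    exact mul_ne_zero two_ne_zero three_ne_zero
  have := hT.apply_add_add_self (hw i) (hw j) (hw k)
  simpa [hwu, hu, h6] using this

theorem IsNodal.apply_ne_zero (hN : T.IsNodal) (hp : T p p = 0)
    (hpq : LinearIndependent K ![p, q]) : T p q ≠ 0 := by
  intro h
  have hp0 : p ≠ 0 := hpq.ne_zero 0
  obtain ⟨c, hc⟩ := Submodule.mem_span_singleton.1 (hN p hp0 hp (LinearMap.mem_ker.2 h))
  exact (LinearIndependent.pair_iff' hp0).1 hpq c hc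

theorem IsNodal.linearIndependent_triple [NeZero (2 : K)] (hN : T.IsNodal) (hT : T.IsSymm)
    {v : Fin 3 → V} (hv : ∀ i, T (v i) (v i) = 0)
    (hpair : Pairwise fun i j => LinearIndependent K ![v i, v j]) : LinearIndependent K v := by
  rw [Fintype.linearIndependent_iff]
  intro g hg
  have hw (i) : T (g i • v i) (g i • v i) = 0 := by simp [hv i]
  have h0 (i) : v i ≠ 0 := by
    obtain ⟨j, hj⟩ := exists_ne i
    exact (hpair hj.symm).ne_zero 0
  have coeff_mul_eq_zero {i j k} (hij : i ≠ j) (h : g i • v i + g j • v j + g k • v k = 0) :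
      g i * g j = 0 := by
    have := hT.apply_eq_zero_of_add_add_eq_zero (hw i) (hw j) (hw k) h
    simpa [hN.apply_ne_zero (hv i) (hpair hij), or_comm] using this
  rw [Fin.sum_univ_three] at hg
  have h01 : g 0 * g 1 = 0 := coeff_mul_eq_zero (by decide) hg
  have h02 : g 0 * g 2 = 0 := coeff_mul_eq_zero (k := 1) (by decide) (by rw [← hg]; abel)
  have h12 : g 1 * g 2 = 0 := coeff_mul_eq_zero (k := 0) (by decide) (by rw [← hg]; abel)
  intro i
  by_contra hi
  fin_cases i <;> simp_all

theorem IsNodal.apply_triple_ne_zero [FiniteDimensional K V] (hN : T.IsNodal) (hT : T.IsSymm)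
    (hV : finrank K V ≤ 4) {v : Fin 3 → V} (hv : ∀ i, T (v i) (v i) = 0)
    (hli : LinearIndependent K v) : T (v 0) (v 1) (v 2) ≠ 0 := by
  intro h
  have isotropic (i j) : T (v 0) (v i) (v j) = 0 := by
    fin_cases i <;> fin_cases j <;>
      simp [hv, h, hT.right_comm _ (v 2) (v 1), hT.apply_mid_eq_zero, hT.apply_left_eq_zero]
  have hker : finrank K (LinearMap.ker (T (v 0))) ≤ 1 :=
    (Submodule.finrank_mono (hN _ (hli.ne_zero 0) (hv 0))).trans
      (finrank_span_singleton (hli.ne_zero 0)).le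
  have := two_mul_card_le_finrank_add_finrank_ker hli isotropic
  rw [Fintype.card_fin] at this
  lia

theorem IsNodal.linearIndependent [NeZero (2 : K)] [NeZero (3 : K)] [FiniteDimensional K V]
    [Fintype ι] (hN : T.IsNodal) (hT : T.IsSymm) (hV : finrank K V ≤ 4)
    (hι : Fintype.card ι ≤ 5) {v : ι → V} (h0 : ∀ i, v i ≠ 0) (hv : ∀ i, T (v i) (v i) = 0)
    (hpair : Pairwise fun i j => LinearIndependent K ![v i, v j]) : LinearIndependent K v := by
  classical
  rw [Fintype.linearIndependent_iff]
  intro g hg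
  set s : Finset ι := {i | g i ≠ 0}
  have hs : s.card ≤ 2 := by
    by_contra! h
    obtain ⟨i, hi, j, hj, k, hk, hij, hik, hjk⟩ := Finset.two_lt_card.1 h
    have hinj : Function.Injective ![i, j, k] := by
      intro a b
      fin_cases a <;> fin_cases b <;> simp [hij, hij.symm, hik, hik.symm, hjk, hjk.symm]
    have hne : T (v i) (v j) (v k) ≠ 0 :=
      hN.apply_triple_ne_zero hT hV (v := v ∘ ![i, j, k]) (fun _ => hv _)
        (hN.linearIndependent_triple hT (fun _ => hv _) (hpair.comp_of_injective hinj))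
    have := hT.apply_eq_zero_of_sum_eq_zero hι (fun l => by simp [hv l]) hg hij hik hjk
    simp_all [s]
  have hsum : ∑ i ∈ s, g i • v i = 0 := by
    rw [← hg]
    exact Finset.sum_subset s.subset_univ fun i _ hi => by simp_all [s]
  intro i
  by_contra hi
  exact hi (linearIndepOn_finset_iff.1 (linearIndepOn_of_card_le_two hs h0 hpair) g hsum i
    (by simpa [s] using hi))

end TrilinearForm

section Polarization

variable {R σ : Type*} [CommRing R] [Fintype σ]

/-- The derivation `∂ₓ = ∑ i, x i • ∂ᵢ` of differentiation in the direction of a vector `x`. -/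
noncomputable def dirDeriv : (σ → R) →ₗ[R] Derivation R (MvPolynomial σ R) (MvPolynomial σ R) :=
  Fintype.linearCombination R pderiv

theorem dirDeriv_apply (x : σ → R) (G : MvPolynomial σ R) :
    dirDeriv x G = ∑ i, x i • pderiv i G := by
  let evalAt : Derivation R (MvPolynomial σ R) (MvPolynomial σ R) →+ MvPolynomial σ R :=
    (Pi.evalAddMonoidHom _ G).comp Derivation.coeFnAddMonoidHom
  exact map_sum evalAt (fun i => x i • pderiv i) Finset.univ

theorem dirDeriv_X (x : σ → R) (i : σ) : dirDeriv x (X i) = C (x i) := by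
  classical
  simp [dirDeriv_apply, pderiv_X, Pi.single_apply, smul_eq_C_mul]

theorem dirDeriv_comm (x y : σ → R) (G : MvPolynomial σ R) :
    dirDeriv x (dirDeriv y G) = dirDeriv y (dirDeriv x G) := by
  have h : ⁅dirDeriv x, dirDeriv y⁆ = 0 :=
    derivation_ext fun i => by simp [Derivation.commutator_apply, dirDeriv_X]
  simpa [Derivation.commutator_apply, sub_eq_zero] using DFunLike.congr_fun h G

theorem isHomogeneous_dirDeriv {G : MvPolynomial σ R} {n : ℕ} (hG : G.IsHomogeneous n)
    (x : σ → R) : (dirDeriv x G).IsHomogeneous (n - 1) := by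
  rw [dirDeriv_apply]
  refine IsHomogeneous.sum _ _ _ fun i _ => ?_
  rw [smul_eq_C_mul]
  exact hG.pderiv.C_mul _

theorem eval_dirDeriv_self {G : MvPolynomial σ R} {n : ℕ} (hG : G.IsHomogeneous n) (x : σ → R) :
    eval x (dirDeriv x G) = n * eval x G := by
  simpa [dirDeriv_apply, smul_eq_C_mul] using congrArg (eval x) hG.sum_X_mul_pderiv

theorem eval_dirDeriv_eq_zero_iff {G : MvPolynomial σ R} {p : σ → R} :
    (∀ x, eval p (dirDeriv x G) = 0) ↔ ∀ i, eval p (pderiv i G) = 0 := by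
  classical
  refine ⟨fun h i => ?_, fun h x => by simp [dirDeriv_apply, smul_eval, h]⟩
  simpa [dirDeriv_apply, Pi.single_apply, smul_eval] using h (Pi.single i 1)

theorem constantCoeff_dirDeriv {G : MvPolynomial σ R} (hG : G.IsHomogeneous 1) (x : σ → R) :
    constantCoeff (dirDeriv x G) = eval x G := by
  have h0 : (dirDeriv x G).IsHomogeneous 0 := isHomogeneous_dirDeriv hG x
  have euler : eval x (dirDeriv x G) = eval x G := by simpa using eval_dirDeriv_self hG x
  rw [← euler, totalDegree_eq_zero_iff_eq_C.1 (Nat.le_zero.1 h0.totalDegree_le)]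
  simp

/-- The symmetric trilinear form `(x, y, z) ↦ ∂ₓ∂ᵧ∂_z F` of a cubic form `F`, normalised so that it
is `6 F` on the diagonal. For homogeneous `F` of degree three `∂ₓ∂ᵧ∂_z F` is a constant, which is
read off as its constant coefficient. -/
noncomputable def polarization (F : MvPolynomial σ R) : TrilinearForm R (σ → R) where
  toFun x := LinearMap.mk₂ R
    (fun y z => constantCoeff (dirDeriv x (dirDeriv y (dirDeriv z F))))
    (by simp) (by simp) (by simp) (by simp)
  map_add' x y := by ext; simp
  map_smul' c x := by ext; simp

theorem polarization_apply (F : MvPolynomial σ R) (x y z : σ → R) :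
    polarization F x y z = constantCoeff (dirDeriv x (dirDeriv y (dirDeriv z F))) := rfl

theorem polarization_isSymm (F : MvPolynomial σ R) : (polarization F).IsSymm where
  left_comm x y := LinearMap.ext fun z => by
    simp only [polarization_apply, dirDeriv_comm x y]
  right_comm x y z := by simp only [polarization_apply, dirDeriv_comm y z]

/-- The Hessian matrix of `F` at the point `p`. -/
noncomputable def hessian (F : MvPolynomial σ R) (p : σ → R) : Matrix σ σ R :=
  Matrix.of fun i j => eval p (pderiv i (pderiv j F))

variable {F : MvPolynomial σ R}

theorem polarization_eq_eval (hF : F.IsHomogeneous 3) (p y z : σ → R) :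
    polarization F p y z = eval p (dirDeriv y (dirDeriv z F)) :=
  constantCoeff_dirDeriv (isHomogeneous_dirDeriv (isHomogeneous_dirDeriv hF z) y) p

theorem polarization_eq_dotProduct_hessian (hF : F.IsHomogeneous 3) (p y z : σ → R) :
    polarization F p y z = y ⬝ᵥ (hessian F p).mulVec z := by
  rw [polarization_eq_eval hF, dirDeriv_apply y, dirDeriv_apply z]
  simp [hessian, dotProduct, Matrix.mulVec, smul_eval, mul_comm]

theorem polarization_self_self (hF : F.IsHomogeneous 3) (p z : σ → R) :
    polarization F p p z = 2 * eval p (dirDeriv z F) := by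
  rw [polarization_eq_eval hF]
  exact_mod_cast eval_dirDeriv_self (isHomogeneous_dirDeriv hF z) p

end Polarization

section NodalCubic

variable {K σ : Type*} [Field K] [Fintype σ] {F : MvPolynomial σ K}

/-- Every singular point of the hypersurface `F = 0` is an ordinary node: the Hessian matrix has
corank one at each nonzero common zero of the partial derivatives. -/
def HasOnlyNodes (F : MvPolynomial σ K) : Prop :=
  ∀ p : σ → K, p ≠ 0 → (∀ i, eval p (pderiv i F) = 0) →
    (hessian F p).rank + 1 = Fintype.card σ

theorem polarization_self_eq_zero_iff [NeZero (2 : K)] (hF : F.IsHomogeneous 3) {p : σ → K} :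
    polarization F p p = 0 ↔ ∀ i, eval p (pderiv i F) = 0 := by
  rw [← eval_dirDeriv_eq_zero_iff, LinearMap.ext_iff]
  simp [polarization_self_self hF, two_ne_zero]

theorem ker_polarization (hF : F.IsHomogeneous 3) (p : σ → K) :
    LinearMap.ker (polarization F p) = LinearMap.ker (hessian F p).mulVecLin := by
  ext q
  have hpq (y : σ → K) : polarization F p q y = (hessian F p).mulVec q ⬝ᵥ y := by
    rw [(polarization_isSymm F).right_comm, polarization_eq_dotProduct_hessian hF, dotProduct_comm]
  rw [LinearMap.mem_ker, LinearMap.mem_ker, Matrix.mulVecLin_apply, ← dotProduct_eq_zero_iff,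
    LinearMap.ext_iff]
  simp [hpq]

theorem HasOnlyNodes.isNodal_polarization [NeZero (2 : K)] (hnode : HasOnlyNodes F)
    (hF : F.IsHomogeneous 3) : (polarization F).IsNodal := by
  intro p hp0 hp
  have hker : finrank K (LinearMap.ker (polarization F p)) = 1 := by
    have hrank := hnode p hp0 ((polarization_self_eq_zero_iff hF).1 hp)
    have := LinearMap.finrank_range_add_finrank_ker (hessian F p).mulVecLin
    rw [← Matrix.rank, Module.finrank_fintype_fun_eq_card, ← ker_polarization hF] at this
    lia
  have hle : K ∙ p ≤ LinearMap.ker (polarization F p) := by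
    simpa using hp
  refine (Submodule.eq_of_le_of_finrank_eq hle ?_).ge
  rw [finrank_span_singleton hp0, hker]

theorem HasOnlyNodes.independent_of_singular [NeZero (2 : K)] [NeZero (3 : K)]
    (hnode : HasOnlyNodes F) (hF : F.IsHomogeneous 3) (hσ : Fintype.card σ ≤ 4)
    {ι : Type*} [Fintype ι] (hι : Fintype.card ι ≤ 5) {f : ι → ℙ K (σ → K)}
    (hf : Function.Injective f) (hsing : ∀ i j, eval (f i).rep (pderiv j F) = 0) :
    Projectivization.Independent f := by
  rw [Projectivization.independent_iff]
  refine (hnode.isNodal_polarization hF).linearIndependent (polarization_isSymm F) (by simpa) hι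
    (fun i => (f i).rep_nonzero) (fun i => (polarization_self_eq_zero_iff hF).2 (hsing i))
    ?_
  intro i j hij
  rw [Function.comp_apply, Function.comp_apply,
    ← Projectivization.independent_mk_iff_LinearIndependent (f i).rep_nonzero (f j).rep_nonzero]
  simpa using hf.ne hij

theorem nodal_cubic_surface_has_at_most_four_singular_points_general [NeZero (2 : K)]
    [NeZero (3 : K)] (hσ : Fintype.card σ ≤ 4) (hF : F.IsHomogeneous 3) (hnode : HasOnlyNodes F) :
    {x : ℙ K (σ → K) | ∀ i, eval x.rep (pderiv i F) = 0}.Finite ∧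
      {x : ℙ K (σ → K) | ∀ i, eval x.rep (pderiv i F) = 0}.ncard ≤ Fintype.card σ := by
  rw [← Set.encard_le_coe_iff_finite_ncard_le]
  by_contra! hlt
  obtain ⟨t, htS, ht⟩ := Set.exists_subset_encard_eq (Order.add_one_le_of_lt hlt)
  have : Fintype t := (Set.finite_of_encard_eq_coe ht).fintype
  have hcard : Fintype.card t = Fintype.card σ + 1 := by
    rw [Set.encard_eq_coe_toFinset_card, Set.toFinset_card] at ht
    exact_mod_cast ht
  have hind : Projectivization.Independent ((↑) : t → ℙ K (σ → K)) :=
    hnode.independent_of_singular hF hσ (by lia) Subtype.val_injective fun x => htS x.2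
  have := (Projectivization.independent_iff.1 hind).fintype_card_le_finrank
  rw [hcard, Module.finrank_fintype_fun_eq_card] at this
  lia

end NodalCubic

/-- A nonzero quaternary cubic form over ℂ all of whose singular points are ordinary
nodes (the 4 × 4 Hessian has rank 3 at every nontrivial common zero of the partial
derivatives) defines a cubic surface with at most 4 singular points in `ℙ³(ℂ)`.
In particular, the locus `N_k` of `k`-nodal cubic surfaces is empty for `k > 4`. -/
theorem nodal_cubic_surface_has_at_most_four_singular_points
    (F : MvPolynomial (Fin 4) ℂ) (hF0 : F ≠ 0) (hF : F.IsHomogeneous 3)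
    (hnode : ∀ p : Fin 4 → ℂ, p ≠ 0 → (∀ i, eval p (pderiv i F) = 0) →
      (Matrix.of fun i j : Fin 4 => eval p (pderiv i (pderiv j F))).rank = 3) :
    {x : Projectivization ℂ (Fin 4 → ℂ) |
      ∀ i, eval x.rep (pderiv i F) = 0}.Finite ∧
    {x : Projectivization ℂ (Fin 4 → ℂ) |
      ∀ i, eval x.rep (pderiv i F) = 0}.ncard ≤ 4 :=
  nodal_cubic_surface_has_at_most_four_singular_points_general (by simp) hF fun p hp0 hp =>
    congrArg (· + 1) (hnode p hp0 hp)
end
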